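/- arXiv:1011.3062 — 9 statements merged into one kernel-verified Lean document; each statement's English description precedes it below -/
import Mathlib

section
/- Fix i ∈ A and o_i ∈ ℝ, and define the offer profile O by: for every i' ∈ A, O_{i'} = max over all paths P from i to i' in S of f^P_{i,i'}(o_i) (with O_i = o_i), and for every j ∈ B, O_j = max over i' ∈ Nbr(j) of v_j(i', O_{i'}). Then for every edge (i',j) ∈ E, either (i',j) ∈ EQ(O), or every path from i to i' in EQ(O) contains at least one node of Nbr^{EQ(O)}(j), the set of neighbors of j in the equality subgraph EQ(O). -/
open Classical

variable {V : Type*}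

namespace GSM

/-- Symmetric adjacency induced by a set of (directed A→B) edges. -/
def Adj (E : Finset (V × V)) (a b : V) : Prop := (a, b) ∈ E ∨ (b, a) ∈ E

/-- A path from `k` to `k'`: a nonempty list of distinct nodes starting at `k`,
ending at `k'`, with consecutive nodes adjacent. -/
def IsPath (E : Finset (V × V)) (p : List V) (k k' : V) : Prop :=
  p.head? = some k ∧ p.getLast? = some k' ∧ p.Nodup ∧ p.Chain' (Adj E)

/-- The offer induced at the end of a path, starting from offer `x` at its head:
`O_{x_0} = x` and `O_{x_{n+1}} = v_{x_{n+1}}(x_n, O_{x_n})`. -/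
def pathOffer (v : V → V → ℝ → ℝ) : List V → ℝ → ℝ
  | [], x => x
  | [_], x => x
  | a :: b :: rest, x => pathOffer v (b :: rest) (v b a x)

/-- The equality subgraph of an offer profile: edges `(i,j) ∈ E` with `O j = v j i (O i)`. -/
noncomputable def EQg (E : Finset (V × V)) (v : V → V → ℝ → ℝ) (O : V → ℝ) : Finset (V × V) :=
  E.filter fun e => O e.2 = v e.2 e.1 (O e.1)

/-- Stability of an offer profile: for every edge `(i,j) ∈ E`, `O j ≥ v j i (O i)`. -/
def Stable (E : Finset (V × V)) (v : V → V → ℝ → ℝ) (O : V → ℝ) : Prop :=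
  ∀ e ∈ E, v e.2 e.1 (O e.1) ≤ O e.2

/-- A matching: no two distinct edges share a node. -/
def IsMatching (M : Finset (V × V)) : Prop :=
  ∀ e ∈ M, ∀ e' ∈ M, e ≠ e' → e.1 ≠ e'.1 ∧ e.1 ≠ e'.2 ∧ e.2 ≠ e'.1 ∧ e.2 ≠ e'.2

/-- A node is matched if it lies on an edge of the matching. -/
def Matched (M : Finset (V × V)) (x : V) : Prop := ∃ e ∈ M, e.1 = x ∨ e.2 = x

/-- A near-perfect matching relative to the node set `X`: exactly one node of `X` is unmatched. -/
def NearPerfect (M : Finset (V × V)) (X : Finset V) : Prop :=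
  ∃! x, x ∈ X ∧ ¬ Matched M x

/-- Undirected membership of an edge in an edge set. -/
def SymMem (M : Finset (V × V)) (e : V × V) : Prop := e ∈ M ∨ e.swap ∈ M

/-- A list of nodes is alternating for the matching `M`: consecutive edges alternate
between edges of `M` and non-edges of `M`. -/
def IsAlternating (M : Finset (V × V)) (p : List V) : Prop :=
  List.Chain' (fun e e' => SymMem M e ↔ ¬ SymMem M e') (p.zip p.tail)

/-- `T` is a tree on the node set `X`: all its edges join nodes of `X` and any two
nodes of `X` are joined by a unique path in `T`. -/
def IsTreeOn (T : Finset (V × V)) (X : Finset V) : Prop :=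
  (∀ e ∈ T, e.1 ∈ X ∧ e.2 ∈ X) ∧ ∀ x ∈ X, ∀ y ∈ X, ∃! p : List V, IsPath T p x y

/-- Degree of a node: number of incident edges of `T`. -/
noncomputable def degr (T : Finset (V × V)) (x : V) : ℕ :=
  (T.filter fun e => e.1 = x ∨ e.2 = x).card

/-- An alternating tree on node set `X` for the matching `M`, rooted at `r`:
a tree containing exactly one unmatched node `r`, in which every path from `r`
is an alternating path, every node at odd distance from `r` has degree 2, and
every leaf is at even distance from `r`. -/
def IsAltTreeOn (T M : Finset (V × V)) (r : V) (X : Finset V) : Prop :=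
  IsTreeOn T X ∧ r ∈ X ∧ ¬ Matched M r ∧ (∀ x ∈ X, x ≠ r → Matched M x) ∧
  (∀ x ∈ X, ∀ p : List V, IsPath T p r x → IsAlternating M p) ∧
  (∀ x ∈ X, ∀ p : List V, IsPath T p r x →
    (Odd (p.length - 1) → degr T x = 2) ∧ (degr T x = 1 → Even (p.length - 1)))

/-- A stable alternating spanning tree generating offer profile: a stable offer profile
whose equality subgraph contains a near-perfect matching together with an associated
alternating spanning tree. -/
def SASTG (A B : Finset V) (E : Finset (V × V)) (v : V → V → ℝ → ℝ) (O : V → ℝ) : Prop :=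
  Stable E v O ∧
  ∃ M T r, IsMatching M ∧ M ⊆ EQg E v O ∧ NearPerfect M (A ∪ B) ∧
    T ⊆ EQg E v O ∧ IsAltTreeOn T M r (A ∪ B)

/-- `y` is a child of `x` in the tree `T` rooted at `r`: there is a path from `r`
to `y` in `T` whose second-to-last node is `x`. -/
def IsChild (T : Finset (V × V)) (r x y : V) : Prop :=
  ∃ p : List V, IsPath T p r y ∧ p.dropLast.getLast? = some x

/-- A node reachable by an alternating path from some unmatched node of `A`. -/
def AltReach (G M : Finset (V × V)) (A : Finset V) (x : V) : Prop :=
  ∃ i ∈ A, ¬ Matched M i ∧ ∃ p : List V, IsPath G p i x ∧ IsAlternating M p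

theorem aux_offer (G : Finset (V × V)) (v : V → V → ℝ → ℝ) (O : V → ℝ)
    (hG : ∀ a b, Adj G a b → O b = v b a (O a)) (k' : V) (r : List V) :
    ∀ (l : List V) (a : V), (a :: l).IsChain (Adj G) → (a :: l).getLast? = some k' →
      pathOffer v (a :: l ++ r) (O a) = pathOffer v (k' :: r) (O k') := by
  intro l
  induction l with
  | nil => intro a _ h; simp at h; subst h; rfl
  | cons b l ih =>
    intro a hc hl
    rw [List.isChain_cons_cons] at hc
    have h2 := ih b hc.2 (by simpa using hl)
    simp only [List.cons_append] at h2 ⊢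
    rw [pathOffer, ← hG a b hc.1, h2]

theorem aux_pred (R : V → V → Prop) (j : V) :
    ∀ (l : List V) (a : V), (a :: l).IsChain R → j ∈ l → ∃ k ∈ a :: l, R k j := by
  intro l
  induction l with
  | nil => intro a _ h; simp at h
  | cons b l ih =>
    intro a hc hj
    rw [List.isChain_cons_cons] at hc
    rcases List.mem_cons.1 hj with rfl | hj
    · exact ⟨a, by simp, hc.1⟩
    · obtain ⟨k, hk, hR⟩ := ih b hc.2 hj
      exact ⟨k, List.mem_cons_of_mem _ hk, hR⟩

/-- for the offer profile generated by maximum offer inducing paths from `i`,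
every edge `(i',j)` is either in the equality subgraph, or every path from `i` to `i'`
inside the equality subgraph passes through a neighbor of `j` in the equality subgraph. -/
theorem paths_blocked_by_eq_neighbors [DecidableEq V]
    (A B : Finset V) (E : Finset (V × V))
    (hdisj : Disjoint A B) (hA : A.Nonempty) (hB : B.Nonempty)
    (hE : E ⊆ A ×ˢ B)
    (hconn : ∀ x ∈ A ∪ B, ∀ y ∈ A ∪ B, ∃ p : List V, IsPath E p x y)
    (v : V → V → ℝ → ℝ)
    (hvC : ∀ e ∈ E, Continuous (v e.2 e.1) ∧ Continuous (v e.1 e.2))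
    (hvA : ∀ e ∈ E, StrictAnti (v e.2 e.1) ∧ StrictAnti (v e.1 e.2))
    (hvInv : ∀ e ∈ E, (∀ x, v e.1 e.2 (v e.2 e.1 x) = x) ∧ (∀ x, v e.2 e.1 (v e.1 e.2 x) = x))
    (i : V) (hi : i ∈ A) (o : ℝ) (O : V → ℝ) (hOi : O i = o)
    (hOA : ∀ i' ∈ A, (∃ P : List V, IsPath E P i i' ∧ pathOffer v P o = O i') ∧
      ∀ P : List V, IsPath E P i i' → pathOffer v P o ≤ O i')
    (hOB : ∀ j ∈ B, (∃ i', (i', j) ∈ E ∧ O j = v j i' (O i')) ∧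
      ∀ i', (i', j) ∈ E → v j i' (O i') ≤ O j)
 :
    ∀ i' j : V, (i', j) ∈ E →
      ((i', j) ∈ EQg E v O ∨
        ∀ p : List V, IsPath (EQg E v O) p i i' → ∃ k ∈ p, (k, j) ∈ EQg E v O) := by
  intro i' j hij
  by_contra hcon
  push Not at hcon
  obtain ⟨hne, p, ⟨hhd, hlast, hnd, hch⟩, hno⟩ := hcon
  have hmem : ∀ a b, (a, b) ∈ EQg E v O ↔ (a, b) ∈ E ∧ O b = v b a (O a) := by
    intro a b; simp [EQg]
  have hAB : ∀ a b, (a, b) ∈ E → a ∈ A ∧ b ∈ B := by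
    intro a b h; simpa using hE h
  have hG : ∀ a b, Adj (EQg E v O) a b → O b = v b a (O a) := by
    rintro a b (h | h)
    · exact ((hmem _ _).1 h).2
    · have h' := (hmem _ _).1 h
      rw [h'.2, (hvInv _ h'.1).1]
  have hjB := (hAB _ _ hij).2
  have hjA : j ∉ A := fun h => Finset.disjoint_left.1 hdisj h hjB
  obtain ⟨⟨k, hkE, hk⟩, hmax⟩ := hOB j hjB
  have hkA := (hAB _ _ hkE).1
  have hkp : k ∉ p := fun h => hno k h ((hmem _ _).2 ⟨hkE, hk⟩)
  have hlt : v j i' (O i') < O j :=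
    lt_of_le_of_ne (hmax _ hij) fun h => hne ((hmem _ _).2 ⟨hij, h.symm⟩)
  obtain ⟨a, l, rfl⟩ : ∃ a l, p = a :: l := by
    cases p with
    | nil => simp at hhd
    | cons a l => exact ⟨a, l, rfl⟩
  obtain rfl : a = i := by simpa using hhd
  have hjp : j ∉ a :: l := by
    intro h
    rcases List.mem_cons.1 h with rfl | h
    · exact hjA hi
    · obtain ⟨m, hm, hR⟩ := aux_pred _ j l a hch h
      rcases hR with hR | hR
      · exact hno m hm hR
      · exact hjA (hAB _ _ ((hmem _ _).1 hR).1).1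
  have hjk : j ≠ k := fun h => hjA (h ▸ hkA)
  have hpath : IsPath E (a :: l ++ [j, k]) a k := by
    refine ⟨by simp, by rw [List.getLast?_append]; simp, ?_, ?_⟩
    · rw [List.nodup_append]
      refine ⟨hnd, by simp [hjk], ?_⟩
      intro x hx y hy hxy
      subst hxy
      simp only [List.mem_cons, List.not_mem_nil, or_false] at hy
      rcases hy with rfl | rfl
      · exact hjp hx
      · exact hkp hx
    · refine List.IsChain.append ?_ ?_ ?_
      · refine List.IsChain.imp ?_ hch
        rintro x y (h | h)
        · exact Or.inl ((hmem _ _).1 h).1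
        · exact Or.inr ((hmem _ _).1 h).1
      · simp [Adj, hkE]
      · intro x hx y hy
        rw [hlast] at hx
        simp at hx hy
        subst hx hy
        exact Or.inl hij
  have hle := (hOA k hkA).2 _ hpath
  rw [← hOi, aux_offer (EQg E v O) v O hG i' [j, k] l a hch hlast] at hle
  simp only [pathOffer] at hle
  have h1 := (hvA _ hkE).2 hlt
  have h2 := (hvInv _ hkE).1 (O k)
  simp only at h1 h2
  rw [hk, h2] at h1
  linarith

end GSM
end

section
/- Fix i ∈ A and o_i ∈ ℝ, and define the offer profile O by: for every i' ∈ A, O_{i'} = max over all paths P from i to i' in S of f^P_{i,i'}(o_i) (with O_i = o_i), and for every j ∈ B, O_j = max over i' ∈ Nbr(j) of v_j(i', O_{i'}). If (i',j') and (i',j'') are edges of E not in EQ(O) and v_{i'}(j', O_{j'}) > v_{i'}(j'', O_{j''}), then every path from i to j' in EQ(O) contains at least one node of Nbr^{EQ(O)}(j''), the set of neighbors of j'' in EQ(O). -/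
open Classical

variable {V : Type*}

namespace GSM

theorem pathOffer_snoc (v : V → V → ℝ → ℝ) (a b : V) :
    ∀ (p : List V) (x : ℝ), p.getLast? = some a →
      pathOffer v (p ++ [b]) x = v b a (pathOffer v p x)
  | [], x, h => by simp at h
  | [c], x, h => by
      simp at h
      subst h
      simp [pathOffer]
  | c :: d :: rest, x, h => by
      have h' : (d :: rest).getLast? = some a := by
        rw [List.getLast?_cons_cons] at h
        exact h
      have := pathOffer_snoc v a b (d :: rest) (v d c x) h'
      simpa [pathOffer] using this

theorem pathOffer_eq (G : Finset (V × V)) (v : V → V → ℝ → ℝ) (O : V → ℝ)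
    (hG : ∀ a b, Adj G a b → O b = v b a (O a)) (y : V) :
    ∀ (p : List V) (x : V), p.head? = some x → p.getLast? = some y → p.IsChain (Adj G) →
      pathOffer v p (O x) = O y
  | [], x, h, _, _ => by simp at h
  | [c], x, h, h', _ => by
      simp at h h'
      subst h
      subst h'
      simp [pathOffer]
  | c :: d :: rest, x, h, h', hc => by
      simp at h
      subst h
      rw [List.getLast?_cons_cons] at h'
      rw [List.isChain_cons_cons] at hc
      have := pathOffer_eq G v O hG y (d :: rest) d (by simp) h' hc.2
      rw [pathOffer, ← hG _ _ hc.1]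
      exact this

theorem IsPath.snoc {E : Finset (V × V)} {p : List V} {x y z : V} (h : IsPath E p x y)
    (ha : Adj E y z) (hz : z ∉ p) : IsPath E (p ++ [z]) x z := by
  obtain ⟨h1, h2, h3, h4⟩ := h
  refine ⟨?_, by simp, ?_, ?_⟩
  · cases p with
    | nil => simp at h1
    | cons c t => simpa using h1
  · rw [List.nodup_append]
    refine ⟨h3, by simp, ?_⟩
    rintro a hap b hb rfl
    simp at hb
    subst hb
    exact hz hap
  · refine List.IsChain.append h4 (by simp) ?_
    intro a ha' b hb
    simp at hb
    subst hb
    rw [h2] at ha'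
    simp at ha'
    subst ha'
    exact ha

theorem IsPath.mono {E G : Finset (V × V)} {p : List V} {x y : V} (hGE : G ⊆ E)
    (h : IsPath G p x y) : IsPath E p x y :=
  ⟨h.1, h.2.1, h.2.2.1, List.IsChain.imp (fun _ _ hab => hab.imp (fun q => hGE q) (fun q => hGE q)) h.2.2.2⟩

theorem IsPath.trunc {G : Finset (V × V)} {p : List V} {x y z : V}
    (h : IsPath G p x y) (hz : z ∈ p) :
    ∃ q, IsPath G q x z ∧ ∀ a ∈ q, a ∈ p := by
  obtain ⟨s, t, rfl⟩ := List.append_of_mem hz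
  obtain ⟨h1, h2, h3, h4⟩ := h
  have e : s ++ z :: t = (s ++ [z]) ++ t := by simp
  refine ⟨s ++ [z], ⟨?_, by simp, ?_, ?_⟩, ?_⟩
  · cases s <;> simpa using h1
  · rw [e] at h3
    exact (List.nodup_append.1 h3).1
  · rw [e] at h4
    exact List.IsChain.left_of_append h4
  · intro a ha
    rw [e]
    exact List.mem_append_left _ ha

theorem IsPath.pred {G : Finset (V × V)} {p : List V} {x y z : V}
    (h : IsPath G p x y) (hz : z ∈ p) (hzx : z ≠ x) : ∃ a ∈ p, Adj G a z := by
  obtain ⟨s, t, rfl⟩ := List.append_of_mem hz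
  obtain ⟨h1, h2, h3, h4⟩ := h
  rcases List.eq_nil_or_concat s with rfl | ⟨s', a, rfl⟩
  · simp at h1
    exact absurd h1 hzx
  · refine ⟨a, by simp, ?_⟩
    have e : (s'.concat a) ++ z :: t = s' ++ (a :: z :: t) := by simp
    rw [e] at h4
    exact (List.isChain_cons_cons.1 (List.IsChain.right_of_append h4)).1

/-- for the offer profile generated by maximum offer inducing paths from `i`,
if `(i',j')` and `(i',j'')` are non-equality edges with `v_{i'}(j',O_{j'}) > v_{i'}(j'',O_{j''})`,
then every path from `i` to `j'` inside the equality subgraph passes through a neighbor of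
`j''` in the equality subgraph. -/
theorem paths_to_jp_blocked [DecidableEq V]
    (A B : Finset V) (E : Finset (V × V))
    (hdisj : Disjoint A B) (hA : A.Nonempty) (hB : B.Nonempty)
    (hE : E ⊆ A ×ˢ B)
    (hconn : ∀ x ∈ A ∪ B, ∀ y ∈ A ∪ B, ∃ p : List V, IsPath E p x y)
    (v : V → V → ℝ → ℝ)
    (hvC : ∀ e ∈ E, Continuous (v e.2 e.1) ∧ Continuous (v e.1 e.2))
    (hvA : ∀ e ∈ E, StrictAnti (v e.2 e.1) ∧ StrictAnti (v e.1 e.2))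
    (hvInv : ∀ e ∈ E, (∀ x, v e.1 e.2 (v e.2 e.1 x) = x) ∧ (∀ x, v e.2 e.1 (v e.1 e.2 x) = x))
    (i : V) (hi : i ∈ A) (o : ℝ) (O : V → ℝ) (hOi : O i = o)
    (hOA : ∀ i' ∈ A, (∃ P : List V, IsPath E P i i' ∧ pathOffer v P o = O i') ∧
      ∀ P : List V, IsPath E P i i' → pathOffer v P o ≤ O i')
    (hOB : ∀ j ∈ B, (∃ i', (i', j) ∈ E ∧ O j = v j i' (O i')) ∧
      ∀ i', (i', j) ∈ E → v j i' (O i') ≤ O j)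
    (i' j' j'' : V)
    (h1 : (i', j') ∈ E) (h2 : (i', j'') ∈ E)
    (h1n : (i', j') ∉ EQg E v O) (h2n : (i', j'') ∉ EQg E v O)
    (hgt : v i' j' (O j') > v i' j'' (O j'')) :
    ∀ p : List V, IsPath (EQg E v O) p i j' → ∃ k ∈ p, (k, j'') ∈ EQg E v O := by
  intro p hp
  by_contra hno
  push Not at hno
  have hEA : ∀ {a b}, (a, b) ∈ E → a ∈ A ∧ b ∈ B := fun h => by simpa using hE h
  have hAB : ∀ {a}, a ∈ A → a ∈ B → False := fun ha hb => Finset.disjoint_left.1 hdisj ha hb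
  have hsub : EQg E v O ⊆ E := Finset.filter_subset _ _
  have hEQ : ∀ {a b}, (a, b) ∈ EQg E v O ↔ (a, b) ∈ E ∧ O b = v b a (O a) := by
    intro a b
    simp [EQg]
  have hG : ∀ a b, Adj (EQg E v O) a b → O b = v b a (O a) := by
    rintro a b (h | h)
    · exact (hEQ.1 h).2
    · obtain ⟨hab, he⟩ := hEQ.1 h
      rw [he]
      exact ((hvInv _ hab).1 _).symm
  have hjp : j'' ∉ p := by
    intro hm
    obtain ⟨a, ha, hadj⟩ := hp.pred hm (fun h => hAB hi (h ▸ (hEA h2).2))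
    rcases hadj with h | h
    · exact hno a ha h
    · exact hAB (hEA (hsub h)).1 (hEA h2).2
  have key : ∃ Q, IsPath E Q i i' ∧ (∀ a ∈ Q, a ∈ p ∨ a = i') ∧
      v i' j'' (O j'') < pathOffer v Q o := by
    by_cases hm : i' ∈ p
    · obtain ⟨q, hq, hqp⟩ := hp.trunc hm
      refine ⟨q, hq.mono hsub, fun a ha => Or.inl (hqp a ha), ?_⟩
      rw [← hOi, pathOffer_eq _ v O hG i' q i hq.1 hq.2.1 hq.2.2.2]
      have hlt : v j'' i' (O i') < O j'' :=
        lt_of_le_of_ne ((hOB j'' (hEA h2).2).2 i' h2) (fun h => h2n (hEQ.2 ⟨h2, h.symm⟩))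
      have := (hvA _ h2).2 hlt
      rwa [(hvInv _ h2).1] at this
    · refine ⟨p ++ [i'], (hp.mono hsub).snoc (Or.inr h1) hm, ?_, ?_⟩
      · intro a ha
        simpa using ha
      · rw [pathOffer_snoc v j' i' p o hp.2.1, ← hOi,
          pathOffer_eq _ v O hG j' p i hp.1 hp.2.1 hp.2.2.2]
        exact hgt
  obtain ⟨Q, hQ, hQp, hQo⟩ := key
  obtain ⟨k, hk, hke⟩ := (hOB j'' (hEA h2).2).1
  have hkEQ : (k, j'') ∈ EQg E v O := hEQ.2 ⟨hk, hke⟩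
  have hkQ : k ∉ Q := by
    intro h
    rcases hQp k h with h | h
    · exact hno k h hkEQ
    · exact h2n (h ▸ hkEQ)
  have hjQ : j'' ∉ Q := by
    intro h
    rcases hQp _ h with h | h
    · exact hjp h
    · exact hAB (hEA h2).1 (h ▸ (hEA h2).2)
  have hP1 := hQ.snoc (Or.inl h2) hjQ
  have hP2 := hP1.snoc (Or.inr hk) (by
    intro h
    rw [List.mem_append] at h
    rcases h with h | h
    · exact hkQ h
    · simp at h
      exact hAB (hEA hk).1 (h ▸ (hEA h2).2))
  have hle := (hOA k (hEA hk).1).2 _ hP2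
  rw [pathOffer_snoc v j'' k _ o hP1.2.1, pathOffer_snoc v i' j'' Q o hQ.2.1] at hle
  have a1 := (hvA _ h2).1 hQo
  simp only [(hvInv _ h2).2] at a1
  have a2 := (hvA _ hk).2 a1
  have a3 : v k j'' (O j'') = O k := by
    rw [hke]
    exact (hvInv _ hk).1 _
  simp only [a3] at a2
  exact absurd hle (not_le.2 a2)

end GSM
end

section
/- Let A and B be finite disjoint sets with |A| − |B| = 1, let O be an offer profile, and suppose the equality subgraph EQ(O) is connected. If there exists a rooted tree T contained in EQ(O) such that no node j ∈ B is a leaf of T and every node j ∈ B has exactly one child in T, then EQ(O) contains a near-perfect matching. -/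
open Classical

variable {V : Type*}

namespace GSM

/-- if `|A| = |B| + 1`, the equality subgraph is connected, and it contains a
rooted tree in which no node of `B` is a leaf and every node of `B` has exactly one child,
then the equality subgraph contains a near-perfect matching. -/
theorem near_perfect_matching_of_tree [Fintype V] [DecidableEq V]
    (A B : Finset V) (E : Finset (V × V))
    (hdisj : Disjoint A B) (hA : A.Nonempty) (hB : B.Nonempty)
    (hE : E ⊆ A ×ˢ B)
    (hconn : ∀ x ∈ A ∪ B, ∀ y ∈ A ∪ B, ∃ p : List V, IsPath E p x y)
    (v : V → V → ℝ → ℝ)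
    (hvC : ∀ e ∈ E, Continuous (v e.2 e.1) ∧ Continuous (v e.1 e.2))
    (hvA : ∀ e ∈ E, StrictAnti (v e.2 e.1) ∧ StrictAnti (v e.1 e.2))
    (hvInv : ∀ e ∈ E, (∀ x, v e.1 e.2 (v e.2 e.1 x) = x) ∧ (∀ x, v e.2 e.1 (v e.1 e.2 x) = x))
    (hcard : A.card = B.card + 1)
    (O : V → ℝ)
    (hconnEQ : ∀ x ∈ A ∪ B, ∀ y ∈ A ∪ B, ∃ p : List V, IsPath (EQg E v O) p x y)
    (T : Finset (V × V)) (X : Finset V) (r : V)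
    (hTE : T ⊆ EQg E v O) (hXsub : X ⊆ A ∪ B) (hrX : r ∈ X) (hBX : B ⊆ X)
    (hTree : IsTreeOn T X)
    (hleaf : ∀ j ∈ B, degr T j ≠ 1)
    (hchild : ∀ j ∈ B, ∃! y, IsChild T r j y) :
    ∃ M : Finset (V × V), IsMatching M ∧ M ⊆ EQg E v O ∧ NearPerfect M (A ∪ B) := by
  have hex : ∀ j ∈ B, ∃ y, IsChild T r j y := fun j hj => (hchild j hj).exists
  choose! c hc using hex
  have hEQ : ∀ e ∈ EQg E v O, e.1 ∈ A ∧ e.2 ∈ B := by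
    intro e he
    have h1 : e ∈ E := (Finset.mem_filter.1 he).1
    exact Finset.mem_product.1 (hE h1)
  have hnot : ∀ x, x ∈ A → x ∈ B → False := fun x h1 h2 => Finset.disjoint_left.1 hdisj h1 h2
  have hadj : ∀ j y, IsChild T r j y → Adj T j y := by
    rintro j y ⟨p, ⟨_, hl, _, hch⟩, hd⟩
    obtain ⟨q, rfl⟩ := List.getLast?_eq_some_iff.1 hl
    rw [List.dropLast_concat] at hd
    exact (List.isChain_append.1 hch).2.2 j hd y (by simp)
  have hedge : ∀ j ∈ B, (c j, j) ∈ T := by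
    intro j hj
    rcases hadj j (c j) (hc j hj) with h | h
    · exact (hnot j (hEQ _ (hTE h)).1 hj).elim
    · exact h
  have hcA : ∀ j ∈ B, c j ∈ A := fun j hj => (hEQ _ (hTE (hedge j hj))).1
  have hinj : ∀ j ∈ B, ∀ k ∈ B, c j = c k → j = k := by
    intro j hj k hk h
    obtain ⟨p, hp, hpd⟩ := hc j hj
    obtain ⟨q, hq, hqd⟩ := hc k hk
    rw [← h] at hq
    have hpq : p = q := (hTree.2 r hrX (c j) (hTree.1 _ (hedge j hj)).1).unique hp hq
    rw [hpq, hqd] at hpd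
    exact (Option.some.inj hpd).symm
  refine ⟨B.image fun j => (c j, j), ?_, ?_, ?_⟩
  · intro e he e' he' hne
    obtain ⟨j, hj, rfl⟩ := Finset.mem_image.1 he
    obtain ⟨k, hk, rfl⟩ := Finset.mem_image.1 he'
    have hjk : j ≠ k := fun h => hne (by rw [h])
    refine ⟨fun h => hjk (hinj j hj k hk h), fun h => ?_, fun h => ?_, hjk⟩
    · exact hnot (c j) (hcA j hj) (by simp only at h; rw [h]; exact hk)
    · exact hnot (c k) (hcA k hk) (by simp only at h; rw [← h]; exact hj)
  · intro e he
    obtain ⟨j, hj, rfl⟩ := Finset.mem_image.1 he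
    exact hTE (hedge j hj)
  · have hsub : B.image c ⊆ A := by
      intro x hx
      obtain ⟨j, hj, rfl⟩ := Finset.mem_image.1 hx
      exact hcA j hj
    have h1 : (A \ B.image c).card = 1 := by
      rw [Finset.card_sdiff_of_subset hsub, Finset.card_image_of_injOn (fun j hj k hk h => hinj j hj k hk h)]
      omega
    obtain ⟨a, ha⟩ := Finset.card_eq_one.1 h1
    have key : ∀ x, (x ∈ A ∪ B ∧ ¬ Matched (B.image fun j => (c j, j)) x) ↔ x ∈ A \ B.image c := by
      intro x
      constructor
      · rintro ⟨hx, hm⟩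
        rcases Finset.mem_union.1 hx with hx | hx
        · refine Finset.mem_sdiff.2 ⟨hx, fun h => hm ?_⟩
          obtain ⟨j, hj, rfl⟩ := Finset.mem_image.1 h
          exact ⟨(c j, j), Finset.mem_image.2 ⟨j, hj, rfl⟩, Or.inl rfl⟩
        · exact (hm ⟨(c x, x), Finset.mem_image.2 ⟨x, hx, rfl⟩, Or.inr rfl⟩).elim
      · intro h
        obtain ⟨hx, hn⟩ := Finset.mem_sdiff.1 h
        refine ⟨Finset.mem_union_left _ hx, ?_⟩
        rintro ⟨e, he, h⟩
        obtain ⟨j, hj, rfl⟩ := Finset.mem_image.1 he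
        rcases h with h | h
        · exact hn (Finset.mem_image.2 ⟨j, hj, h⟩)
        · exact hnot x hx (by simp only at h; rw [← h]; exact hj)
    refine ⟨a, (key a).2 (by rw [ha]; simp), ?_⟩
    intro y hy
    have := (key y).1 hy
    rw [ha] at this
    exact Finset.mem_singleton.1 this

end GSM
end

section
/- Assume |A| − |B| = 1. Fix i ∈ A and o_i ∈ ℝ. If there exists a stable alternating spanning tree generating offer profile O with O_i = o_i, then O is the unique stable alternating spanning tree generating offer profile with O_i = o_i. -/
open Classical

variable {V : Type*}

namespace GSM

/-- Along an alternating path leaving `N ∪ S` untouched at the start, `N ∪ S` is never entered. -/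
theorem path_avoid (A B : Finset V) (hdisj : Disjoint A B) (T M : Finset (V × V))
    (hT : ∀ e ∈ T, e.1 ∈ A ∧ e.2 ∈ B) (hM : ∀ e ∈ M, e.1 ∈ A ∧ e.2 ∈ B)
    (S N : Finset V) (hSB : S ⊆ B) (hNA : N ⊆ A)
    (hN : ∀ e ∈ T, e.2 ∈ S → e.1 ∈ N)
    (hm : ∀ e ∈ M, e.1 ∈ N → e.2 ∈ S) :
    ∀ (l : List V) (x : V), (x :: l).IsChain (Adj T) → IsAlternating M (x :: l) →
      x ∉ N → x ∉ S →
      (∀ y ∈ l.head?, (x ∈ A → ¬ SymMem M (x, y)) ∧ (x ∈ B → SymMem M (x, y))) →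
      ∀ z ∈ x :: l, z ∉ N ∧ z ∉ S := by
  have hAB : ∀ a, a ∈ A → a ∈ B → False := fun a h1 h2 => Finset.disjoint_left.mp hdisj h1 h2
  intro l
  induction l with
  | nil =>
    intro x _ _ h1 h2 _ z hz
    simp only [List.mem_singleton] at hz
    subst hz; exact ⟨h1, h2⟩
  | cons y l ih =>
    intro x hc ha h1 h2 h3 z hz
    rw [List.isChain_cons_cons] at hc
    obtain ⟨hxy, hc⟩ := hc
    replace h3 := h3 y (by simp)
    have hy : y ∉ N ∧ y ∉ S := by
      rcases hxy with h | h
      · refine ⟨fun hh => hAB y (hNA hh) (hT _ h).2, fun hh => h1 (hN _ h hh)⟩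
      · refine ⟨fun hh => ?_, fun hh => hAB y (hT _ h).1 (hSB hh)⟩
        rcases h3.2 (hT _ h).2 with g | g
        · exact hAB x (hM _ g).1 (hT _ h).2
        · exact h2 (hm _ g hh)
    rcases List.mem_cons.mp hz with rfl | hz
    · exact ⟨h1, h2⟩
    · refine ih y hc ?_ hy.1 hy.2 ?_ z hz
      · unfold IsAlternating at ha ⊢
        simp only [List.tail_cons, List.zip_cons_cons] at ha ⊢
        exact List.IsChain.tail ha
      · intro w hw
        cases l with
        | nil => simp at hw
        | cons w' l =>
          simp at hw
          subst hw
          unfold IsAlternating at ha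
          simp only [List.tail_cons, List.zip_cons_cons] at ha
          have ha := (List.isChain_cons_cons.mp ha).1
          rcases hxy with h | h
          · have := h3.1 (hT _ h).1
            exact ⟨fun hh => (hAB y hh (hT _ h).2).elim, fun _ => by_contra fun hc => this (ha.mpr hc)⟩
          · have := h3.2 (hT _ h).2
            exact ⟨fun _ => ha.mp this, fun hh => (hAB y (hT _ h).1 hh).elim⟩

/-- Strict Hall condition in the equality subgraph. -/
theorem strict_hall (A B : Finset V) (E : Finset (V × V))
    (hdisj : Disjoint A B) (hE : E ⊆ A ×ˢ B) (v : V → V → ℝ → ℝ)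
    (hcard : A.card = B.card + 1) (O : V → ℝ) (hO : SASTG A B E v O)
    (S N : Finset V) (hS : S.Nonempty) (hSB : S ⊆ B) (hNA : N ⊆ A)
    (hN : ∀ e ∈ EQg E v O, e.2 ∈ S → e.1 ∈ N) : S.card < N.card := by
  have hAB : ∀ a, a ∈ A → a ∈ B → False := fun a h1 h2 => Finset.disjoint_left.mp hdisj h1 h2
  obtain ⟨_, M, T, r, hMm, hME, _, hTE, ⟨_, hpath⟩, hr, hrM, hall, halt, _⟩ := hO
  have hEQ : ∀ e ∈ EQg E v O, e.1 ∈ A ∧ e.2 ∈ B := fun e he =>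
    Finset.mem_product.mp (hE (Finset.mem_filter.mp he).1)
  have hM : ∀ e ∈ M, e.1 ∈ A ∧ e.2 ∈ B := fun e he => hEQ e (hME he)
  have hT : ∀ e ∈ T, e.1 ∈ A ∧ e.2 ∈ B := fun e he => hEQ e (hTE he)
  have hrA : r ∈ A := by
    by_contra hrA
    have h : ∀ a ∈ A, ∃ b, (a, b) ∈ M := by
      intro a ha
      obtain ⟨e, he, h | h⟩ := hall a (by simp [ha]) (fun h => hrA (h ▸ ha))
      · exact ⟨e.2, by rw [← h]; exact he⟩
      · exact (hAB a ha (h ▸ (hM e he).2)).elim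
    choose! f hf using h
    have := Finset.card_le_card_of_injOn (s := A) (t := B) f
      (fun a ha => (hM _ (hf a ha)).2) (by
        intro a ha a' ha' h
        by_contra hne
        exact (hMm _ (hf a ha) _ (hf a' ha') (fun hh => hne (congrArg Prod.fst hh))).2.2.2 h)
    omega
  have h : ∀ b ∈ B, ∃ a, (a, b) ∈ M := by
    intro b hb
    obtain ⟨e, he, h | h⟩ := hall b (by simp [hb]) (fun h => hAB r hrA (h ▸ hb))
    · exact (hAB b (h ▸ (hM e he).1) hb).elim
    · exact ⟨e.1, by rw [← h]; exact he⟩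
  choose! m hmM using h
  have hinj : Set.InjOn m S := by
    intro a ha a' ha' h
    by_contra hne
    exact (hMm _ (hmM a (hSB ha)) _ (hmM a' (hSB ha'))
      (fun hh => hne (congrArg Prod.snd hh))).1 h
  have hsub : S.image m ⊆ N := by
    intro a ha
    obtain ⟨b, hb, rfl⟩ := Finset.mem_image.mp ha
    exact hN _ (hME (hmM b (hSB hb))) hb
  have hci : (S.image m).card = S.card := Finset.card_image_of_injOn hinj
  by_contra hlt
  have hNeq : S.image m = N := Finset.eq_of_subset_of_card_le hsub (by omega)
  have hm : ∀ e ∈ M, e.1 ∈ N → e.2 ∈ S := by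
    intro e he h1
    rw [← hNeq] at h1
    obtain ⟨b, hb, hbe⟩ := Finset.mem_image.mp h1
    by_cases hh : (m b, b) = e
    · rw [← hh]; exact hb
    · exact ((hMm _ (hmM b (hSB hb)) _ he hh).1 hbe).elim
  obtain ⟨s, hs⟩ := hS
  have hsX : s ∈ A ∪ B := Finset.mem_union_right _ (hSB hs)
  obtain ⟨p, hp, _⟩ := hpath r hr s hsX
  have hpa := halt s hsX p hp
  obtain ⟨hh, hl, _, hc⟩ := hp
  cases p with
  | nil => simp at hh
  | cons x l =>
    simp at hh
    subst hh
    refine (path_avoid A B hdisj T M hT hM S N hSB hNA (fun e he => hN e (hTE he)) hm l x hc hpa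
      ?_ (fun h => hAB x hrA (hSB h)) ?_ s (List.mem_of_getLast? hl)).2 hs
    · intro h
      rw [← hNeq] at h
      obtain ⟨b, hb, hbx⟩ := Finset.mem_image.mp h
      exact hrM ⟨_, hmM b (hSB hb), Or.inl hbx⟩
    · intro y _
      refine ⟨fun _ h => ?_, fun h => (hAB x hrA h).elim⟩
      rcases h with h | h
      · exact hrM ⟨_, h, Or.inl rfl⟩
      · exact hrM ⟨_, h, Or.inr rfl⟩

/-- One direction of the comparison. -/
theorem sastg_le (A B : Finset V) (E : Finset (V × V))
    (hdisj : Disjoint A B) (hB : B.Nonempty) (hE : E ⊆ A ×ˢ B) (v : V → V → ℝ → ℝ)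
    (hvA : ∀ e ∈ E, StrictAnti (v e.2 e.1))
    (hcard : A.card = B.card + 1) (i : V) (hi : i ∈ A)
    (O O' : V → ℝ) (hO : SASTG A B E v O) (hO' : SASTG A B E v O') (hii : O' i = O i) :
    (∀ b ∈ B, O' b ≤ O b) ∧ (∀ a ∈ A, O a ≤ O' a) := by
  have h1 : (B.filter fun b => O' b ≤ O b).Nonempty →
      (B.filter fun b => O' b ≤ O b).card < (A.filter fun a => ¬ O' a < O a).card := by
    intro hne
    refine strict_hall A B E hdisj hE v hcard O hO _ _ hne (Finset.filter_subset _ _)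
      (Finset.filter_subset _ _) ?_
    intro e he hes
    obtain ⟨heE, heq⟩ := Finset.mem_filter.mp he
    refine Finset.mem_filter.mpr ⟨(Finset.mem_product.mp (hE heE)).1, fun hlt => ?_⟩
    have := hvA e heE hlt
    have := hO'.1 e heE
    have := (Finset.mem_filter.mp hes).2
    linarith
  have h2 : (B.filter fun b => ¬ O' b ≤ O b).Nonempty →
      (B.filter fun b => ¬ O' b ≤ O b).card < (A.filter fun a => O' a < O a).card := by
    intro hne
    refine strict_hall A B E hdisj hE v hcard O' hO' _ _ hne (Finset.filter_subset _ _)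
      (Finset.filter_subset _ _) ?_
    intro e he hes
    obtain ⟨heE, heq⟩ := Finset.mem_filter.mp he
    refine Finset.mem_filter.mpr ⟨(Finset.mem_product.mp (hE heE)).1, ?_⟩
    by_contra hlt
    have := (hvA e heE).antitone (not_lt.mp hlt)
    have := hO.1 e heE
    have := (Finset.mem_filter.mp hes).2
    linarith
  have cB := Finset.card_filter_add_card_filter_not (s := B) (fun b => O' b ≤ O b)
  have cA := Finset.card_filter_add_card_filter_not (s := A) (fun a => O' a < O a)
  have hipos : 0 < (A.filter fun a => ¬ O' a < O a).card :=
    Finset.card_pos.mpr ⟨i, Finset.mem_filter.mpr ⟨hi, by rw [hii]; exact lt_irrefl _⟩⟩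
  rw [← Finset.card_pos] at h1 h2 hB
  have hB0 : (B.filter fun b => ¬ O' b ≤ O b).card = 0 := by omega
  have hA0 : (A.filter fun a => O' a < O a).card = 0 := by omega
  rw [Finset.card_eq_zero, Finset.filter_eq_empty_iff] at hB0 hA0
  exact ⟨fun b hb => not_not.mp (hB0 hb), fun a ha => not_lt.mp (hA0 ha)⟩

/-- when `|A| = |B| + 1`, a stable alternating spanning tree generating offer
profile is uniquely determined by its value at any fixed node `i ∈ A`. -/
theorem sastg_unique [Fintype V] [DecidableEq V]
    (A B : Finset V) (E : Finset (V × V))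
    (hdisj : Disjoint A B) (hA : A.Nonempty) (hB : B.Nonempty)
    (hE : E ⊆ A ×ˢ B)
    (hconn : ∀ x ∈ A ∪ B, ∀ y ∈ A ∪ B, ∃ p : List V, IsPath E p x y)
    (v : V → V → ℝ → ℝ)
    (hvC : ∀ e ∈ E, Continuous (v e.2 e.1) ∧ Continuous (v e.1 e.2))
    (hvA : ∀ e ∈ E, StrictAnti (v e.2 e.1) ∧ StrictAnti (v e.1 e.2))
    (hvInv : ∀ e ∈ E, (∀ x, v e.1 e.2 (v e.2 e.1 x) = x) ∧ (∀ x, v e.2 e.1 (v e.1 e.2 x) = x))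
    (hcard : A.card = B.card + 1)
    (i : V) (hi : i ∈ A) (oi : ℝ)
    (O : V → ℝ) (hO : SASTG A B E v O) (hOi : O i = oi) :
    ∀ O' : V → ℝ, SASTG A B E v O' → O' i = oi → ∀ x ∈ A ∪ B, O' x = O x := by
  intro O' hO' hOi' x hx
  have hv : ∀ e ∈ E, StrictAnti (v e.2 e.1) := fun e he => (hvA e he).1
  have h1 := sastg_le A B E hdisj hB hE v hv hcard i hi O O' hO hO' (by rw [hOi, hOi'])
  have h2 := sastg_le A B E hdisj hB hE v hv hcard i hi O' O hO' hO (by rw [hOi, hOi'])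
  rcases Finset.mem_union.mp hx with h | h
  · exact le_antisymm (h2.2 x h) (h1.2 x h)
  · exact le_antisymm (h1.1 x h) (h2.1 x h)

end GSM
end

section
/- Assume |A| − |B| = 1. Fix i ∈ A and c_i ∈ ℝ, and assume that for every o_i ≤ c_i there exists a stable alternating spanning tree generating offer profile O with O_i = o_i. Let O¹ and O² be two stable alternating spanning tree generating offer profiles with O¹_i ≤ c_i and O²_i ≤ c_i. If O¹_i < O²_i, then O¹_{i'} < O²_{i'} for every i' ∈ A, and O¹_{j'} > O²_{j'} for every j' ∈ B. -/
open Classical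

variable {V : Type*}

namespace GSM

/-- Following an alternating chain inside a closed set `S ∪ N`. -/
theorem chain_closed (T M : Finset (V × V)) (S N : Finset V)
    (hSN : ∀ x ∈ S, ∀ y, Adj T x y → y ∈ N)
    (hNS : ∀ x ∈ N, ∀ y, SymMem M (x, y) → y ∈ S) (z : V) :
    ∀ (p : List V) (x : V), List.IsChain (Adj T) (x :: p) → IsAlternating M (x :: p) →
      (x :: p).getLast? = some z →
      ((x ∈ S ∧ ∀ y, p.head? = some y → ¬ SymMem M (x, y)) ∨
        (x ∈ N ∧ ∀ y, p.head? = some y → SymMem M (x, y))) → z ∈ S ∨ z ∈ N := by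
  intro p
  induction p with
  | nil =>
    intro x _ _ hl h
    simp at hl
    subst hl
    rcases h with h | h
    · exact Or.inl h.1
    · exact Or.inr h.1
  | cons y p ih =>
    intro x hch halt hl h
    rw [List.isChain_cons_cons] at hch
    have hl' : (y :: p).getLast? = some z := by
      rw [← hl, List.getLast?_cons_cons]
    have halt' : IsAlternating M (y :: p) := by
      unfold IsAlternating at halt ⊢
      cases p with
      | nil => exact List.isChain_nil
      | cons w p =>
        simp only [List.tail_cons, List.zip_cons_cons] at halt ⊢
        exact (List.isChain_cons_cons.1 halt).2
    have hstep : ∀ w, p.head? = some w → (SymMem M (x, y) ↔ ¬ SymMem M (y, w)) := by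
      intro w hw
      cases p with
      | nil => simp at hw
      | cons w' p =>
        simp at hw
        subst hw
        unfold IsAlternating at halt
        simp only [List.tail_cons, List.zip_cons_cons] at halt
        exact (List.isChain_cons_cons.1 halt).1
    refine ih y hch.2 halt' hl' ?_
    rcases h with ⟨hx, h⟩ | ⟨hx, h⟩
    · right
      refine ⟨hSN x hx y hch.1, fun w hw => ?_⟩
      have h1 := h y rfl
      have h2 := hstep w hw
      by_contra h3
      exact h1 (h2.2 h3)
    · left
      have h1 := h y rfl
      refine ⟨hNS x hx y h1, fun w hw => ?_⟩
      exact (hstep w hw).1 h1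

theorem exists_partner {A B : Finset V} {M : Finset (V × V)} (hdisj : Disjoint A B)
    (hM : ∀ e ∈ M, e.1 ∈ A ∧ e.2 ∈ B) {a : V} (ha : a ∈ A) (hm : Matched M a) :
    ∃ b, (a, b) ∈ M := by
  obtain ⟨e, he, h | h⟩ := hm
  · exact ⟨e.2, by rw [← h]; exact he⟩
  · exact absurd (h ▸ (hM e he).2) (Finset.disjoint_left.1 hdisj ha)

theorem matching_inj {M : Finset (V × V)} (hM : IsMatching M) {a a' b : V}
    (h : (a, b) ∈ M) (h' : (a', b) ∈ M) : a = a' := by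
  by_contra hne
  exact (hM _ h _ h' (by simpa using hne)).2.2.2 rfl

/-- In an alternating spanning tree the root lies on the larger side. -/
theorem root_mem_left {A B : Finset V} {M T : Finset (V × V)} {r : V}
    (hdisj : Disjoint A B) (hcard : A.card = B.card + 1)
    (hMAB : ∀ e ∈ M, e.1 ∈ A ∧ e.2 ∈ B) (hmat : IsMatching M)
    (htree : IsAltTreeOn T M r (A ∪ B)) : r ∈ A := by
  by_contra hr
  obtain ⟨-, -, -, hall, -⟩ := htree
  have hp : ∀ a, ∃ b, a ∈ A → (a, b) ∈ M := by
    intro a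
    by_cases ha : a ∈ A
    · obtain ⟨b, hb⟩ := exists_partner hdisj hMAB ha
        (hall a (Finset.mem_union_left _ ha) (fun h => hr (h ▸ ha)))
      exact ⟨b, fun _ => hb⟩
    · exact ⟨a, fun h => absurd h ha⟩
  choose f hf using hp
  have : A.card ≤ B.card := by
    refine Finset.card_le_card_of_injOn f (fun a ha => (hMAB _ (hf a ha)).2) ?_
    intro a ha a' ha' h
    have h2 := hf a' ha'
    rw [← h] at h2
    exact matching_inj hmat (hf a ha) h2
  omega

/-- Hall-type condition for alternating spanning trees. -/
theorem hall_tree {A B : Finset V} {G M T : Finset (V × V)} {r : V}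
    (hdisj : Disjoint A B) (hcard : A.card = B.card + 1)
    (hG : ∀ e ∈ G, e.1 ∈ A ∧ e.2 ∈ B) (hMG : M ⊆ G) (hTG : T ⊆ G) (hmat : IsMatching M)
    (htree : IsAltTreeOn T M r (A ∪ B))
    (S N : Finset V) (hSA : S ⊆ A) (hNB : N ⊆ B) (a₀ : V) (ha₀ : a₀ ∈ A) (ha₀S : a₀ ∉ S)
    (hSN : ∀ e ∈ G, e.1 ∈ S → e.2 ∈ N) (hSne : S.Nonempty) : S.card ≤ N.card := by
  have hrA := root_mem_left hdisj hcard (fun e he => hG e (hMG he)) hmat htree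
  obtain ⟨hT, hrX, hrM, hall, halt, -⟩ := htree
  by_contra hlt
  push Not at hlt
  have hp : ∀ a, ∃ b, a ∈ A → a ≠ r → (a, b) ∈ M := by
    intro a
    by_cases ha : a ∈ A ∧ a ≠ r
    · obtain ⟨b, hb⟩ := exists_partner hdisj (fun e he => hG e (hMG he)) ha.1
        (hall a (Finset.mem_union_left _ ha.1) ha.2)
      exact ⟨b, fun _ _ => hb⟩
    · exact ⟨a, fun h h' => absurd ⟨h, h'⟩ ha⟩
  choose f hf using hp
  have hinj : Set.InjOn f (S.erase r : Finset V) := by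
    intro a ha a' ha' h
    simp only [Finset.coe_erase, Set.mem_sdiff, Finset.mem_coe, Set.mem_singleton_iff] at ha ha'
    have h2 := hf a' (hSA ha'.1) ha'.2
    rw [← h] at h2
    exact matching_inj hmat (hf a (hSA ha.1) ha.2) h2
  have hsub : (S.erase r).image f ⊆ N := by
    intro b hb
    obtain ⟨a, ha, rfl⟩ := Finset.mem_image.1 hb
    rw [Finset.mem_erase] at ha
    exact hSN _ (hMG (hf a (hSA ha.2) ha.1)) ha.2
  have hcardim : ((S.erase r).image f).card = (S.erase r).card :=
    Finset.card_image_of_injOn hinj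
  have hrS : r ∈ S := by
    by_contra h
    have := Finset.card_le_card hsub
    rw [hcardim, Finset.erase_eq_of_notMem h] at this
    omega
  have heq : (S.erase r).image f = N := by
    refine Finset.eq_of_subset_of_card_le hsub ?_
    rw [hcardim, Finset.card_erase_of_mem hrS]
    omega
  obtain ⟨p, hpath, -⟩ := hT.2 r hrX a₀ (Finset.mem_union_left _ ha₀)
  have hpalt := halt a₀ (Finset.mem_union_left _ ha₀) p hpath
  obtain ⟨hph, hpl, -, hpc⟩ := hpath
  cases p with
  | nil => simp at hph
  | cons x p =>
    simp at hph
    subst hph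
    have := chain_closed T M S N ?_ ?_ a₀ p x hpc hpalt hpl (Or.inl ⟨hrS, ?_⟩)
    · rcases this with h | h
      · exact ha₀S h
      · exact Finset.disjoint_left.1 hdisj ha₀ (hNB h)
    · rintro y hy z (h | h)
      · exact hSN _ (hTG h) hy
      · exact absurd (hG _ (hTG h)).2 (Finset.disjoint_left.1 hdisj (hSA hy))
    · intro b hb z hz
      rw [← heq] at hb
      obtain ⟨a, ha, rfl⟩ := Finset.mem_image.1 hb
      rw [Finset.mem_erase] at ha
      have hfa := hf a (hSA ha.2) ha.1
      rcases hz with h | h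
      · exact absurd (hG _ (hMG hfa)).2 (Finset.disjoint_left.1 hdisj (hG _ (hMG h)).1)
      · have : a = z := matching_inj hmat hfa h
        exact this ▸ ha.2
    · rintro y - (h | h)
      · exact hrM ⟨_, h, Or.inl rfl⟩
      · exact hrM ⟨_, h, Or.inr rfl⟩

theorem right_matched {A B : Finset V} {M T : Finset (V × V)} {r b : V}
    (htree : IsAltTreeOn T M r (A ∪ B)) (hb : b ∈ B) (hne : b ≠ r) : Matched M b :=
  htree.2.2.2.1 b (Finset.mem_union_right _ hb) hne

/-- strict monotonicity of stable alternating spanning tree generating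
offer profiles in the offer of a fixed node `i ∈ A` (Lemma 5 of the paper). -/
theorem sastg_strict_monotone [Fintype V] [DecidableEq V]
    (A B : Finset V) (E : Finset (V × V))
    (hdisj : Disjoint A B) (hA : A.Nonempty) (hB : B.Nonempty)
    (hE : E ⊆ A ×ˢ B)
    (hconn : ∀ x ∈ A ∪ B, ∀ y ∈ A ∪ B, ∃ p : List V, IsPath E p x y)
    (v : V → V → ℝ → ℝ)
    (hvC : ∀ e ∈ E, Continuous (v e.2 e.1) ∧ Continuous (v e.1 e.2))
    (hvA : ∀ e ∈ E, StrictAnti (v e.2 e.1) ∧ StrictAnti (v e.1 e.2))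
    (hvInv : ∀ e ∈ E, (∀ x, v e.1 e.2 (v e.2 e.1 x) = x) ∧ (∀ x, v e.2 e.1 (v e.1 e.2 x) = x))
    (hcard : A.card = B.card + 1)
    (i : V) (hi : i ∈ A) (c : ℝ)
    (hex : ∀ o ≤ c, ∃ O : V → ℝ, SASTG A B E v O ∧ O i = o)
    (O1 O2 : V → ℝ) (h1 : SASTG A B E v O1) (h2 : SASTG A B E v O2)
    (hc1 : O1 i ≤ c) (hc2 : O2 i ≤ c) (hlt : O1 i < O2 i) :
    (∀ i' ∈ A, O1 i' < O2 i') ∧ (∀ j' ∈ B, O2 j' < O1 j') := by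
  obtain ⟨hs1, M1, T1, r1, hm1, hME1, -, hTE1, ht1⟩ := h1
  obtain ⟨hs2, M2, T2, r2, hm2, hME2, -, hTE2, ht2⟩ := h2
  have hEQ : ∀ O : V → ℝ, ∀ e ∈ EQg E v O, e ∈ E ∧ O e.2 = v e.2 e.1 (O e.1) := by
    intro O e he
    exact Finset.mem_filter.1 he
  have hG : ∀ O : V → ℝ, ∀ e ∈ EQg E v O, e.1 ∈ A ∧ e.2 ∈ B := by
    intro O e he
    exact Finset.mem_product.1 (hE (hEQ O e he).1)
  have hdown : ∀ e ∈ EQg E v O2, O1 e.1 < O2 e.1 → O2 e.2 < O1 e.2 := by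
    intro e he h
    obtain ⟨heE, heq⟩ := hEQ O2 e he
    have h3 := (hvA e heE).1 h
    have h4 := hs1 e heE
    linarith
  have hup : ∀ e ∈ EQg E v O1, ¬ O1 e.1 < O2 e.1 → ¬ O2 e.2 < O1 e.2 := by
    intro e he h
    obtain ⟨heE, heq⟩ := hEQ O1 e he
    have h3 := (hvA e heE).1.antitone (not_lt.1 h)
    have h4 := hs2 e heE
    intro h5
    linarith
  have hAall : ∀ i' ∈ A, O1 i' < O2 i' := by
    intro a₀ ha₀
    by_contra hna
    have k2 := hall_tree hdisj hcard (hG O2) hME2 hTE2 hm2 ht2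
      (A.filter fun a => O1 a < O2 a) (B.filter fun b => O2 b < O1 b)
      (Finset.filter_subset _ _) (Finset.filter_subset _ _) a₀ ha₀
      (fun h => hna (Finset.mem_filter.1 h).2)
      (fun e he h => Finset.mem_filter.2 ⟨(hG O2 e he).2, hdown e he (Finset.mem_filter.1 h).2⟩)
      ⟨i, Finset.mem_filter.2 ⟨hi, hlt⟩⟩
    have k1 := hall_tree hdisj hcard (hG O1) hME1 hTE1 hm1 ht1
      (A.filter fun a => ¬ O1 a < O2 a) (B.filter fun b => ¬ O2 b < O1 b)
      (Finset.filter_subset _ _) (Finset.filter_subset _ _) i hi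
      (fun h => (Finset.mem_filter.1 h).2 hlt)
      (fun e he h => Finset.mem_filter.2 ⟨(hG O1 e he).2, hup e he (Finset.mem_filter.1 h).2⟩)
      ⟨a₀, Finset.mem_filter.2 ⟨ha₀, hna⟩⟩
    have cA := Finset.card_filter_add_card_filter_not (s := A) (fun a => O1 a < O2 a)
    have cB := Finset.card_filter_add_card_filter_not (s := B) (fun b => O2 b < O1 b)
    omega
  refine ⟨hAall, fun b hb => ?_⟩
  have hMAB : ∀ e ∈ M2, e.1 ∈ A ∧ e.2 ∈ B := fun e he => hG O2 e (hME2 he)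
  have hr2 := root_mem_left hdisj hcard hMAB hm2 ht2
  obtain ⟨e, he, h | h⟩ := right_matched ht2 hb
    (fun h => Finset.disjoint_left.1 hdisj hr2 (h ▸ hb))
  · exact absurd hb (Finset.disjoint_left.1 hdisj (h ▸ (hMAB e he).1))
  · exact h ▸ hdown e (hME2 he) (hAall _ (hMAB e he).1)

end GSM
end

section
/- Assume |A| − |B| = 1 and assume there exists a stable alternating spanning tree generating offer profile O. Then for every i ∈ A and every o_i ≤ O_i, there exists a stable alternating spanning tree generating offer profile O* with O*_i = o_i. -/
open Classical

variable {V : Type*}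

namespace GSM

def Tight (E : V → V → Prop) (F : V → V → ℝ → ℝ) (B : Finset V) (p : V → ℝ) (a b : V) : Prop :=
  b ∈ B ∧ E a b ∧ ∀ b' ∈ B, E a b' → F a b' (p b') ≤ F a b (p b)

noncomputable def NA (E : V → V → Prop) (F : V → V → ℝ → ℝ) (A B : Finset V) (p : V → ℝ)
    (S : Finset V) : Finset V := A.filter fun a => ∃ b ∈ S, Tight E F B p a b

noncomputable def NB (E : V → V → Prop) (F : V → V → ℝ → ℝ) (B : Finset V) (p : V → ℝ)
    (W : Finset V) : Finset V := B.filter fun b => ∃ a ∈ W, Tight E F B p a b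

def Sur (E : V → V → Prop) (F : V → V → ℝ → ℝ) (A B : Finset V) (p : V → ℝ) : Prop :=
  ∀ S ⊆ B, S.Nonempty → S.card + 1 ≤ (NA E F A B p S).card

lemma hall_dual {E : V → V → Prop} {F : V → V → ℝ → ℝ} {A B : Finset V} {p : V → ℝ}
    (hc : A.card = B.card + 1) (h : Sur E F A B p) {i : V} (hi : i ∈ A)
    (W : Finset V) (hW : W ⊆ A.erase i) : W.card ≤ (NB E F B p W).card := by
  have hWc := Finset.card_le_card hW
  rw [Finset.card_erase_of_mem hi] at hWc
  have hsub : NB E F B p W ⊆ B := Finset.filter_subset _ _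
  have h1 := Finset.card_sdiff_add_card_eq_card hsub
  rcases (B \ NB E F B p W).eq_empty_or_nonempty with he | hne
  · rw [he] at h1; simp at h1; omega
  have h2 := h _ Finset.sdiff_subset hne
  have hWA : W ⊆ A := hW.trans (Finset.erase_subset _ _)
  have h3 : NA E F A B p (B \ NB E F B p W) ⊆ A \ W := by
    intro a ha
    simp only [NA, NB, Finset.mem_filter, Finset.mem_sdiff] at ha ⊢
    obtain ⟨haA, b, ⟨hbB, hb⟩, ht⟩ := ha
    exact ⟨haA, fun haW => hb ⟨hbB, a, haW, ht⟩⟩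
  have h4 := Finset.card_le_card h3
  have h5 := Finset.card_sdiff_add_card_eq_card hWA
  omega

lemma exists_tight {E : V → V → Prop} {F : V → V → ℝ → ℝ} {B : Finset V} (p : V → ℝ)
    {a b : V} (hb : b ∈ B) (hE : E a b) : ∃ c, Tight E F B p a c := by
  obtain ⟨c, hc, hm⟩ := (B.filter fun b => E a b).exists_max_image (fun b => F a b (p b))
    ⟨b, by simp [hb, hE]⟩
  simp only [Finset.mem_filter] at hc hm
  exact ⟨c, hc.1, hc.2, fun b' hb' he => hm b' ⟨hb', he⟩⟩

lemma sur_tight {E : V → V → Prop} {F : V → V → ℝ → ℝ} {A B : Finset V} {p : V → ℝ}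
    (hc : A.card = B.card + 1) (h : Sur E F A B p) (hB : B.Nonempty) {a : V} (ha : a ∈ A) :
    ∃ b, Tight E F B p a b := by
  have h1 := h B subset_rfl hB
  have h2 : NA E F A B p B = A := Finset.eq_of_subset_of_card_le (Finset.filter_subset _ _) (by omega)
  rw [← h2] at ha
  simp only [NA, Finset.mem_filter] at ha
  obtain ⟨_, b, _, ht⟩ := ha
  exact ⟨b, ht⟩

/-- Closeness estimate. -/
lemma close_chain {E : V → V → Prop} {F : V → V → ℝ → ℝ}
    (hFc : ∀ a b, Continuous (F a b)) (hFa : ∀ a b, StrictAnti (F a b))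
    {A B : Finset V} {p : V → ℝ}
    (hc : A.card = B.card + 1) (h : Sur E F A B p) {i : V} (hi : i ∈ A) {u : ℝ}
    (hu : ∀ b ∈ B, E i b → F i b (p b) ≤ u) :
    ∀ k ≤ B.card, ∀ ε > 0, ∃ δ > 0, ∀ q : V → ℝ, (∀ b ∈ B, p b ≤ q b) → Sur E F A B q →
      (∀ j, Tight E F B q i j → u - δ ≤ F i j (q j)) →
      k ≤ (B.filter fun b => q b ≤ p b + ε).card := by
  intro k
  induction k with
  | zero => intro _ ε _; exact ⟨1, one_pos, by simp⟩
  | succ k ih =>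
    intro hk ε hε
    -- choose ε'
    have e1 : ∀ᶠ e in nhdsWithin (0:ℝ) (Set.Ioi 0), ∀ a ∈ A, ∀ l ∈ B, ∀ j ∈ B,
        Tight E F B p a l → E a j → F a j (p j + ε) ≤ F a l (p l + e) := by
      simp only [Finset.eventually_all]
      intro a _ l _ j hj
      by_cases ht : Tight E F B p a l ∧ E a j
      · have hlt : F a j (p j + ε) < F a l (p l + 0) := by
          rw [add_zero]
          exact (hFa a j (by linarith)).trans_le (ht.1.2.2 j hj ht.2)
        have hcont : Continuous fun e : ℝ => F a l (p l + e) :=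
          (hFc a l).comp (by fun_prop)
        have := (hcont.tendsto 0).eventually (lt_mem_nhds hlt)
        filter_upwards [nhdsWithin_le_nhds this] with e he _ _ using he.le
      · filter_upwards with e h1 h2 using absurd ⟨h1, h2⟩ ht
    have e2 : ∀ᶠ e in nhdsWithin (0:ℝ) (Set.Ioi 0), e ≤ ε :=
      nhdsWithin_le_nhds ((gt_mem_nhds hε).mono fun _ h => h.le)
    obtain ⟨e, ⟨he1, he2⟩, he0⟩ := ((e1.and e2).and self_mem_nhdsWithin).exists
    have he0 : 0 < e := he0
    obtain ⟨δ', hδ', H⟩ := ih (by omega) e he0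
    have d1 : ∀ᶠ d in nhdsWithin (0:ℝ) (Set.Ioi 0), ∀ j ∈ B, E i j →
        F i j (p j + e) ≤ u - d := by
      simp only [Finset.eventually_all]
      intro j hj
      by_cases ht : E i j
      · have hlt : F i j (p j + e) < u - 0 := by
          rw [sub_zero]
          exact (hFa i j (by linarith)).trans_le (hu j hj ht)
        have hcont : Continuous fun d : ℝ => u - d := by fun_prop
        have := (hcont.tendsto 0).eventually (lt_mem_nhds hlt)
        filter_upwards [nhdsWithin_le_nhds this] with d hd _ using hd.le
      · filter_upwards with e h1 using absurd h1 ht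
    have d2 : ∀ᶠ e in nhdsWithin (0:ℝ) (Set.Ioi 0), e ≤ δ' :=
      nhdsWithin_le_nhds ((gt_mem_nhds hδ').mono fun _ h => h.le)
    obtain ⟨d, ⟨hd1, hd2⟩, hd0⟩ := ((d1.and d2).and self_mem_nhdsWithin).exists
    have hd0 : 0 < d := hd0
    refine ⟨d, hd0, fun q hpq hq hiq => ?_⟩
    have hL := H q hpq hq (fun j hj => by linarith [hiq j hj])
    set L := B.filter fun b => q b ≤ p b + e with hLdef
    have hLB : L ⊆ B := Finset.filter_subset _ _
    have hLL : L ⊆ B.filter fun b => q b ≤ p b + ε := by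
      intro b hb
      simp only [hLdef, Finset.mem_filter] at hb ⊢
      exact ⟨hb.1, by linarith⟩
    have hcd := Finset.card_sdiff_add_card_eq_card hLB
    rcases (B \ L).eq_empty_or_nonempty with hem | hne
    · rw [hem] at hcd; simp at hcd
      have := Finset.card_le_card hLL
      omega
    have hW := hq _ Finset.sdiff_subset hne
    have hU : ∀ b ∈ B \ L, p b + e < q b := by
      intro b hb
      simp only [hLdef, Finset.mem_filter, Finset.mem_sdiff] at hb
      by_contra hcon
      exact hb.2 ⟨hb.1, not_lt.1 hcon⟩
    have hWi : NA E F A B q (B \ L) ⊆ A.erase i := by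
      intro a ha
      simp only [NA, Finset.mem_filter] at ha
      obtain ⟨haA, b, hb, ht⟩ := ha
      refine Finset.mem_erase.2 ⟨?_, haA⟩
      rintro rfl
      have h1 := hiq b ht
      have h2 := hFa a b (hU b hb)
      have h3 := hd1 b ht.1 ht.2.1
      linarith
    have hW2 := hall_dual hc h hi _ hWi
    have : ∃ l ∈ NB E F B p (NA E F A B q (B \ L)), l ∈ L := by
      by_contra hcon
      push Not at hcon
      have : NB E F B p (NA E F A B q (B \ L)) ⊆ B \ L := fun l hl =>
        Finset.mem_sdiff.2 ⟨(Finset.mem_filter.1 hl).1, hcon l hl⟩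
      have := Finset.card_le_card this
      omega
    obtain ⟨l, hl, hlL⟩ := this
    obtain ⟨hlB, a, ha, htl⟩ := Finset.mem_filter.1 hl
    obtain ⟨haA, j, hj, htj⟩ := Finset.mem_filter.1 ha
    have hqj : q j ≤ p j + ε := by
      have h1 := htj.2.2 l hlB htl.2.1
      have h2 := he1 a haA l hlB j htj.1 htl htj.2.1
      have h3 := (hFa a l).antitone (Finset.mem_filter.1 hlL).2
      exact (hFa a j).le_iff_ge.1 (by linarith)
    have hins : insert j L ⊆ B.filter fun b => q b ≤ p b + ε := by
      intro b hb
      rcases Finset.mem_insert.1 hb with rfl | hb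
      · exact Finset.mem_filter.2 ⟨htj.1, hqj⟩
      · exact hLL hb
    have := Finset.card_le_card hins
    rw [Finset.card_insert_of_notMem (Finset.mem_sdiff.1 hj).2] at this
    omega

/-- Boundedness estimate. -/
lemma bound_chain [Fintype V] {E : V → V → Prop} {F : V → V → ℝ → ℝ}
    (hFa : ∀ a b, StrictAnti (F a b)) (hFs : ∀ a b, Function.Surjective (F a b))
    {A B : Finset V} {p0 : V → ℝ}
    (hc : A.card = B.card + 1) (h : Sur E F A B p0) {i : V} (hi : i ∈ A) (r : V → ℝ) :
    ∀ k ≤ B.card, ∃ x, (∀ j, r j ≤ x) ∧ ∀ p : V → ℝ,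
      (∀ S ⊆ B, S.Nonempty → (∀ j ∈ S, E i j → r j < p j) →
        S.card + 1 ≤ (NA E F (A.erase i) B p S).card) →
      k ≤ (B.filter fun b => p b ≤ x).card := by
  intro k
  induction k with
  | zero =>
    intro _
    obtain ⟨x, hx⟩ := (Set.finite_range r).bddAbove
    exact ⟨x, fun j => hx ⟨j, rfl⟩, by simp⟩
  | succ k ih =>
    intro hk
    obtain ⟨x, hrx, H⟩ := ih (by omega)
    choose G hG using hFs
    obtain ⟨y, hy⟩ := (Set.finite_range fun t : V × V × V =>
      G t.1 t.2.1 (F t.1 t.2.2 x)).bddAbove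
    refine ⟨max x y, fun j => (hrx j).trans (le_max_left _ _), fun p hp => ?_⟩
    have hL := H p hp
    set L := B.filter fun b => p b ≤ x with hLdef
    have hLB : L ⊆ B := Finset.filter_subset _ _
    have hLL : L ⊆ B.filter fun b => p b ≤ max x y := by
      intro b hb
      simp only [hLdef, Finset.mem_filter] at hb ⊢
      exact ⟨hb.1, hb.2.trans (le_max_left _ _)⟩
    have hcd := Finset.card_sdiff_add_card_eq_card hLB
    rcases (B \ L).eq_empty_or_nonempty with hem | hne
    · rw [hem] at hcd; simp at hcd
      have := Finset.card_le_card hLL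
      omega
    have hW := hp _ Finset.sdiff_subset hne (by
      intro b hb _
      simp only [hLdef, Finset.mem_filter, Finset.mem_sdiff] at hb
      by_contra hcon
      exact hb.2 ⟨hb.1, (not_lt.1 hcon).trans (hrx b)⟩)
    have hW2 := hall_dual hc h hi (NA E F (A.erase i) B p (B \ L)) (Finset.filter_subset _ _)
    have : ∃ l ∈ NB E F B p0 (NA E F (A.erase i) B p (B \ L)), l ∈ L := by
      by_contra hcon
      push Not at hcon
      have : NB E F B p0 (NA E F (A.erase i) B p (B \ L)) ⊆ B \ L := fun l hl =>
        Finset.mem_sdiff.2 ⟨(Finset.mem_filter.1 hl).1, hcon l hl⟩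
      have := Finset.card_le_card this
      omega
    obtain ⟨l, hl, hlL⟩ := this
    obtain ⟨hlB, a, ha, htl⟩ := Finset.mem_filter.1 hl
    obtain ⟨haA, j, hj, htj⟩ := Finset.mem_filter.1 ha
    have hpj : p j ≤ max x y := by
      have h1 := htj.2.2 l hlB htl.2.1
      have h3 := (hFa a l).antitone (Finset.mem_filter.1 hlL).2
      have h4 : p j ≤ G a j (F a l x) := by
        rw [← (hFa a j).le_iff_ge, hG]; linarith
      exact h4.trans ((hy ⟨(a, j, l), rfl⟩).trans (le_max_right _ _))
    have hins : insert j L ⊆ B.filter fun b => p b ≤ max x y := by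
      intro b hb
      rcases Finset.mem_insert.1 hb with rfl | hb
      · exact Finset.mem_filter.2 ⟨htj.1, hpj⟩
      · exact hLL hb
    have := Finset.card_le_card hins
    rw [Finset.card_insert_of_notMem (Finset.mem_sdiff.1 hj).2] at this
    omega

lemma isClosed_tight {E : V → V → Prop} {F : V → V → ℝ → ℝ}
    (hFc : ∀ a b, Continuous (F a b)) (B : Finset V) (a b : V) :
    IsClosed {p : V → ℝ | Tight E F B p a b} := by
  unfold Tight
  by_cases hb : b ∈ B ∧ E a b
  · simp only [hb.1, hb.2, true_and, Set.ofPred_forall]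
    refine isClosed_iInter fun b' => isClosed_iInter fun _ => isClosed_iInter fun _ => ?_
    exact isClosed_le ((hFc _ _).comp (continuous_apply _)) ((hFc _ _).comp (continuous_apply _))
  · convert isClosed_empty
    ext p; simp; tauto

lemma isClosed_card {E : V → V → Prop} {F : V → V → ℝ → ℝ}
    (hFc : ∀ a b, Continuous (F a b)) (A B S : Finset V) (k : ℕ) :
    IsClosed {p : V → ℝ | k ≤ (NA E F A B p S).card} := by
  have : {p : V → ℝ | k ≤ (NA E F A B p S).card} =
      ⋃ W ∈ (A.powersetCard k : Finset (Finset V)), ⋂ a ∈ W, ⋃ b ∈ S,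
        {p : V → ℝ | Tight E F B p a b} := by
    ext p
    simp only [Set.mem_ofPred_eq, Set.mem_iUnion, Set.mem_iInter, Finset.mem_powersetCard,
      exists_prop]
    constructor
    · intro hk
      obtain ⟨W, hW, hWc⟩ := Finset.exists_subset_card_eq hk
      exact ⟨W, ⟨hW.trans (Finset.filter_subset _ _), hWc⟩,
        fun a ha => (Finset.mem_filter.1 (hW ha)).2⟩
    · rintro ⟨W, ⟨hWA, rfl⟩, hW⟩
      exact Finset.card_le_card fun a ha => Finset.mem_filter.2 ⟨hWA ha, hW a ha⟩
  rw [this]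
  refine (Finset.finite_toSet _).isClosed_biUnion fun W _ => ?_
  refine isClosed_iInter fun a => isClosed_iInter fun _ => ?_
  exact (Finset.finite_toSet _).isClosed_biUnion fun b _ => isClosed_tight hFc B a b


/-- Small raise, given the main statement for the market. -/
lemma small_raise {E : V → V → Prop} {F : V → V → ℝ → ℝ}
    (hFc : ∀ a b, Continuous (F a b)) (hFa : ∀ a b, StrictAnti (F a b))
    {A B : Finset V} {p : V → ℝ}
    (hc : A.card = B.card + 1) (hB : B.Nonempty) (h : Sur E F A B p)
    (IH : ∀ i ∈ A, ∀ o, (∃ j, Tight E F B p i j ∧ o ≤ F i j (p j)) →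
      ∃ q : V → ℝ, (∀ b ∈ B, p b ≤ q b) ∧ Sur E F A B q ∧
        ∃ j, Tight E F B q i j ∧ F i j (q j) = o) (ε : ℝ) (hε : 0 < ε) :
    ∃ q : V → ℝ, (∀ b ∈ B, p b ≤ q b) ∧ Sur E F A B q ∧ (∃ b ∈ B, p b < q b) ∧
      ∀ b ∈ B, q b ≤ p b + ε := by
  obtain ⟨i, hi⟩ : A.Nonempty := Finset.card_pos.1 (by omega)
  obtain ⟨j, hj⟩ := sur_tight hc h hB hi
  obtain ⟨δ, hδ, H⟩ := close_chain hFc hFa hc h hi (u := F i j (p j)) hj.2.2 B.card le_rfl ε hε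
  obtain ⟨q, hpq, hq, j', hj', hqj⟩ := IH i hi (F i j (p j) - δ) ⟨j, hj, by linarith⟩
  refine ⟨q, hpq, hq, ?_, ?_⟩
  · refine ⟨j, hj.1, lt_of_le_of_ne (hpq j hj.1) fun heq => ?_⟩
    have := hj'.2.2 j hj.1 hj.2.1
    rw [← heq] at this
    linarith
  · have h1 := H q hpq hq (fun j'' hj'' => by
      have := hj''.2.2 j' hj'.1 hj'.2.1
      linarith)
    have h2 := Finset.eq_of_subset_of_card_le (Finset.filter_subset _ _) h1
    intro b hb
    rw [← h2] at hb
    exact (Finset.mem_filter.1 hb).2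

theorem main_aux [Fintype V] {E : V → V → Prop} {F : V → V → ℝ → ℝ}
    (hFc : ∀ a b, Continuous (F a b)) (hFa : ∀ a b, StrictAnti (F a b))
    (hFs : ∀ a b, Function.Surjective (F a b)) (n : ℕ) :
    ∀ (A B : Finset V) (p0 : V → ℝ), B.card = n → A.card = B.card + 1 → Sur E F A B p0 →
      ∀ i ∈ A, ∀ o, (∃ j, Tight E F B p0 i j ∧ o ≤ F i j (p0 j)) →
      ∃ q : V → ℝ, (∀ b ∈ B, p0 b ≤ q b) ∧ Sur E F A B q ∧
        ∃ j, Tight E F B q i j ∧ F i j (q j) = o := by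
  induction n using Nat.strong_induction_on with
  | _ n IH =>
  intro A B p0 hn hc h i hi o ⟨j0, hj0, hoj0⟩
  have hB : B.Nonempty := ⟨j0, hj0.1⟩
  have hr : ∀ j, ∃ x, F i j x = o := fun j => hFs i j o
  choose r hr using hr
  have hAi : (A.erase i).card = B.card := by rw [Finset.card_erase_of_mem hi]; omega
  set p1 : V → ℝ := fun b => if b ∈ B ∧ E i b then max (p0 b) (r b) else p0 b with hp1
  have hp01 : ∀ b, p0 b ≤ p1 b := by
    intro b; simp only [hp1]; split_ifs
    · exact le_max_left _ _
    · exact le_rfl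
  have hr1 : ∀ b ∈ B, E i b → r b ≤ p1 b := by
    intro b hb he; simp only [hp1, hb, he, and_self, if_true]; exact le_max_right _ _
  have hp1eq : ∀ b, (E i b → r b < p1 b) → p1 b = p0 b := by
    intro b hb
    simp only [hp1] at hb ⊢
    split_ifs with hh
    · rw [if_pos hh] at hb
      have := hb hh.2
      rcases le_total (p0 b) (r b) with hle | hle
      · rw [max_eq_right hle] at this; exact absurd this (lt_irrefl _)
      · exact max_eq_left hle
    · rfl
  let C : (V → ℝ) → Prop := fun p => ∀ S ⊆ B, S.Nonempty → (∀ j ∈ S, E i j → r j < p j) →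
        S.card + 1 ≤ (NA E F (A.erase i) B p S).card
  have hC1 : C p1 := by
    intro S hS hSne hSr
    refine (h S hS hSne).trans (Finset.card_le_card ?_)
    intro a ha
    obtain ⟨haA, b, hb, ht⟩ := Finset.mem_filter.1 ha
    have hbe := hp1eq b (hSr b hb)
    refine Finset.mem_filter.2 ⟨Finset.mem_erase.2 ⟨?_, haA⟩, b, hb, ht.1, ht.2.1, ?_⟩
    · rintro rfl
      have h1 := ht.2.2 j0 hj0.1 hj0.2.1
      have h2 := hSr b hb ht.2.1
      rw [hbe] at h2
      have h3 := hFa a b h2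
      rw [hr b] at h3
      linarith
    · intro b' hb' he'
      rw [hbe]
      exact ((hFa a b').antitone (hp01 b')).trans (ht.2.2 b' hb' he')
  obtain ⟨K, hrK, hK⟩ := bound_chain hFa hFs hc h hi r B.card le_rfl
  have hCK : ∀ p, C p → ∀ b ∈ B, p b ≤ K := by
    intro p hp b hb
    have h2 := Finset.eq_of_subset_of_card_le (Finset.filter_subset _ _) (hK p hp)
    rw [← h2] at hb
    exact (Finset.mem_filter.1 hb).2
  let D : Set (V → ℝ) := {p | C p} ∩ Set.Icc p1 (fun b => if b ∈ B then K else p1 b)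
  have hDc : IsCompact D := by
    refine isCompact_Icc.inter_left ?_
    have : {p | C p} = ⋂ S : Finset V, ⋂ _ : S ⊆ B, ⋂ _ : S.Nonempty,
        ((⋃ j ∈ S.filter (fun j => E i j), {p : V → ℝ | p j ≤ r j}) ∪
          {p | S.card + 1 ≤ (NA E F (A.erase i) B p S).card}) := by
      ext p
      simp only [C, Set.mem_ofPred_eq, Set.mem_iInter, Set.mem_union, Set.mem_iUnion,
        Finset.mem_filter, exists_prop]
      refine forall_congr' fun S => forall_congr' fun _ => forall_congr' fun _ => ?_
      constructor
      · intro hh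
        by_cases hx : ∀ j ∈ S, E i j → r j < p j
        · exact Or.inr (hh hx)
        · push Not at hx
          obtain ⟨j, h1, h2, h3⟩ := hx
          exact Or.inl ⟨j, ⟨h1, h2⟩, h3⟩
      · rintro (⟨j, ⟨h1, h2⟩, h3⟩ | hh) hx
        · exact absurd (hx j h1 h2) (not_lt.2 h3)
        · exact hh
    rw [this]
    refine isClosed_iInter fun S => isClosed_iInter fun _ => isClosed_iInter fun _ => ?_
    refine IsClosed.union ?_ (isClosed_card hFc _ _ _ _)
    exact (Finset.finite_toSet _).isClosed_biUnion fun j _ =>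
      isClosed_le (continuous_apply _) continuous_const
  have hDmem : ∀ p, C p → p1 ≤ p → (∀ b, b ∉ B → p b = p1 b) → p ∈ D := by
    intro p hp hle hoff
    refine ⟨hp, hle, fun b => ?_⟩
    by_cases hb : b ∈ B
    · simp only [hb, if_true]; exact hCK p hp b hb
    · simp only [hb, if_false]; exact (hoff b hb).le
  obtain ⟨p, hpD, hpmax⟩ := hDc.exists_isMaxOn ⟨p1, hDmem p1 hC1 le_rfl fun _ _ => rfl⟩
    (f := fun p => ∑ b, p b) (by fun_prop)
  have hpC : C p := hpD.1
  have hpge : p1 ≤ p := hpD.2.1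
  have hpoff : ∀ b, b ∉ B → p b = p1 b := by
    intro b hb
    have := hpD.2.2 b
    simp only [hb, if_false] at this
    exact le_antisymm this (hpge b)
  -- no overdemand
  have hNO : ∀ W ⊆ A.erase i, W.card ≤ (NB E F B p W).card := by
    by_contra hcon
    push Not at hcon
    have hcon' : ((A.erase i).powerset.filter fun W => (NB E F B p W).card < W.card).Nonempty := by
      obtain ⟨W, hW, hlt⟩ := hcon
      exact ⟨W, by simp [hlt]; exact hW⟩
    obtain ⟨T, hT, hTmin⟩ := Finset.exists_min_image _ Finset.card hcon'
    rw [Finset.mem_filter, Finset.mem_powerset] at hT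
    obtain ⟨hTA, hTlt⟩ := hT
    have hmin : ∀ W ⊂ T, W.card ≤ (NB E F B p W).card := by
      intro W hW
      by_contra hlt
      have := hTmin W (Finset.mem_filter.2 ⟨Finset.mem_powerset.2 (hW.1.trans hTA), not_le.1 hlt⟩)
      exact absurd (Finset.card_lt_card hW) (not_lt.2 this)
    set S := NB E F B p T with hS
    have hSB : S ⊆ B := Finset.filter_subset _ _
    have hTt : ∀ a ∈ T, ∃ c ∈ S, Tight E F B p a c := by
      intro a ha
      obtain ⟨b, hb⟩ := sur_tight hc h hB (Finset.mem_of_mem_erase (hTA ha))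
      obtain ⟨c, hcT⟩ := exists_tight (F := F) p hb.1 hb.2.1
      exact ⟨c, Finset.mem_filter.2 ⟨hcT.1, a, ha, hcT⟩, hcT⟩
    have hTS : ∀ a ∈ T, ∀ c, Tight E F B p a c → c ∈ S := fun a ha c hcT =>
      Finset.mem_filter.2 ⟨hcT.1, a, ha, hcT⟩
    obtain ⟨t, ht⟩ : T.Nonempty := Finset.card_pos.1 (by omega)
    have hSne : S.Nonempty := by
      obtain ⟨c, hcS, _⟩ := hTt t ht
      exact ⟨c, hcS⟩
    have hTc : T.card = S.card + 1 := by
      have h1 := hmin _ (Finset.erase_ssubset ht)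
      have h2 : (NB E F B p (T.erase t)).card ≤ S.card := Finset.card_le_card fun b hb => by
        obtain ⟨hbB, a, ha, hta⟩ := Finset.mem_filter.1 hb
        exact Finset.mem_filter.2 ⟨hbB, a, Finset.mem_of_mem_erase ha, hta⟩
      rw [Finset.card_erase_of_mem ht] at h1
      omega
    have hSurT : Sur E F T S p := by
      intro X hX hXne
      set TX := T.filter fun a => ∃ b ∈ X, Tight E F B p a b with hTX
      have hTXT : TX ⊆ T := Finset.filter_subset _ _
      have hTXne : TX.Nonempty := by
        obtain ⟨x, hx⟩ := hXne
        obtain ⟨_, a, ha, hta⟩ := Finset.mem_filter.1 (hX hx)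
        exact ⟨a, Finset.mem_filter.2 ⟨ha, x, hx, hta⟩⟩
      have h1 := hmin (T \ TX) (Finset.sdiff_ssubset hTXT hTXne)
      have h2 : NB E F B p (T \ TX) ⊆ S \ X := by
        intro b hb
        obtain ⟨hbB, a, ha, hta⟩ := Finset.mem_filter.1 hb
        obtain ⟨haT, haX⟩ := Finset.mem_sdiff.1 ha
        refine Finset.mem_sdiff.2 ⟨hTS a haT b hta, fun hbX => haX ?_⟩
        exact Finset.mem_filter.2 ⟨haT, b, hbX, hta⟩
      have h3 := Finset.card_le_card h2
      have h4 := Finset.card_sdiff_add_card_eq_card hX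
      have h5 := Finset.card_sdiff_add_card_eq_card hTXT
      have h6 : TX ⊆ NA E F T S p X := by
        intro a ha
        obtain ⟨haT, b, hb, hta⟩ := Finset.mem_filter.1 ha
        exact Finset.mem_filter.2 ⟨haT, b, hb, hX hb, hta.2.1, fun b' hb' => hta.2.2 b' (hSB hb')⟩
      have h7 := Finset.card_le_card h6
      omega
    have hSlt : S.card < n := by
      have := Finset.card_le_card hTA
      omega
    -- choose ε
    have e1 : ∀ᶠ e in nhdsWithin (0:ℝ) (Set.Ioi 0), ∀ a ∈ T, ∀ b ∈ B, ∀ c ∈ S, b ∉ S →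
        Tight E F B p a c → E a b → F a b (p b) ≤ F a c (p c + e) := by
      rw [Finset.eventually_all]
      intro a ha
      rw [Finset.eventually_all]
      intro b hb
      rw [Finset.eventually_all]
      intro c hcS
      by_cases hh : b ∉ S ∧ Tight E F B p a c ∧ E a b
      · have hlt : F a b (p b) < F a c (p c + 0) := by
          rw [add_zero]
          refine lt_of_le_of_ne (hh.2.1.2.2 b hb hh.2.2) fun heq => hh.1 ?_
          refine hTS a ha b ⟨hb, hh.2.2, fun b' hb' he' => ?_⟩
          rw [heq]; exact hh.2.1.2.2 b' hb' he'
        have hcont : Continuous fun e : ℝ => F a c (p c + e) :=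
          (hFc a c).comp (by fun_prop)
        have := (hcont.tendsto 0).eventually (lt_mem_nhds hlt)
        filter_upwards [nhdsWithin_le_nhds this] with e he _ _ _ using he.le
      · filter_upwards with e h1 h2 h3 using absurd ⟨h1, h2, h3⟩ hh
    obtain ⟨e, he1, he0⟩ := (e1.and self_mem_nhdsWithin).exists
    have he0 : 0 < e := he0
    obtain ⟨q, hpq, hq, ⟨b0, hb0, hb0lt⟩, hqe⟩ := small_raise hFc hFa hTc hSne hSurT
      (IH S.card hSlt T S p rfl hTc hSurT) e he0
    set p' : V → ℝ := fun b => if b ∈ S then q b else p b with hp'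
    have hpp' : p ≤ p' := by
      intro b; simp only [hp']; split_ifs with hb
      · exact hpq b hb
      · exact le_rfl
    have hp'S : ∀ b ∈ S, p' b = q b := fun b hb => by simp only [hp', hb, if_true]
    have hp'n : ∀ b, b ∉ S → p' b = p b := fun b hb => by simp only [hp', hb, if_false]
    have hC' : C p' := by
      intro X hX hXne hXr
      have s1 : NA E F T S q (X ∩ S) ⊆ NA E F (A.erase i) B p' X := by
        intro a ha
        obtain ⟨haT, b, hb, hta⟩ := Finset.mem_filter.1 ha
        obtain ⟨hbX, hbS⟩ := Finset.mem_inter.1 hb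
        refine Finset.mem_filter.2 ⟨hTA haT, b, hbX, hSB hbS, hta.2.1, fun b' hb' he' => ?_⟩
        rw [hp'S b hbS]
        by_cases hb'S : b' ∈ S
        · rw [hp'S b' hb'S]; exact hta.2.2 b' hb'S he'
        · rw [hp'n b' hb'S]
          obtain ⟨c, hcS, htc⟩ := hTt a haT
          have h1 := he1 a haT b' hb' c hcS hb'S htc he'
          have h2 := (hFa a c).antitone (hqe c hcS)
          have h3 := hta.2.2 c hcS htc.2.1
          linarith
      have s2 : NA E F (A.erase i) B p (X \ S) ⊆ NA E F (A.erase i) B p' X := by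
        intro a ha
        obtain ⟨haA, b, hb, hta⟩ := Finset.mem_filter.1 ha
        obtain ⟨hbX, hbS⟩ := Finset.mem_sdiff.1 hb
        refine Finset.mem_filter.2 ⟨haA, b, hbX, hta.1, hta.2.1, fun b' hb' he' => ?_⟩
        rw [hp'n b hbS]
        exact ((hFa a b').antitone (hpp' b')).trans (hta.2.2 b' hb' he')
      have hdj : Disjoint (NA E F T S q (X ∩ S)) (NA E F (A.erase i) B p (X \ S)) := by
        rw [Finset.disjoint_left]
        intro a ha ha'
        obtain ⟨haA, b, hb, hta⟩ := Finset.mem_filter.1 ha'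
        exact (Finset.mem_sdiff.1 hb).2 (hTS a (Finset.mem_filter.1 ha).1 b hta)
      have hcu := Finset.card_le_card (Finset.union_subset s1 s2)
      rw [Finset.card_union_of_disjoint hdj] at hcu
      have hXc := Finset.card_inter_add_card_sdiff X S
      have k2 : (X \ S).Nonempty →
          (X \ S).card + 1 ≤ (NA E F (A.erase i) B p (X \ S)).card := fun hne =>
        hpC _ (Finset.sdiff_subset.trans hX) hne fun j hj he => by
          have := hXr j (Finset.mem_sdiff.1 hj).1 he
          rwa [hp'n j (Finset.mem_sdiff.1 hj).2] at this
      have k1 : (X ∩ S).Nonempty →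
          (X ∩ S).card + 1 ≤ (NA E F T S q (X ∩ S)).card := fun hne =>
        hq _ Finset.inter_subset_right hne
      have hXpos := Finset.card_pos.2 hXne
      rw [← Finset.card_pos] at k1 k2
      omega
    have hD' : p' ∈ D := hDmem p' hC' (hpge.trans hpp') fun b hb => by
      rw [hp'n b fun hbS => hb (hSB hbS)]; exact hpoff b hb
    have hle : ∑ b, p' b ≤ ∑ b, p b := hpmax hD'
    have hlt : ∑ b, p b < ∑ b, p' b := by
      refine Finset.sum_lt_sum (fun b _ => hpp' b) ⟨b0, Finset.mem_univ _, ?_⟩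
      rw [hp'S b0 hb0]; exact hb0lt
    linarith
  have hrp : ∀ b ∈ B, E i b → r b ≤ p b := fun b hb he => (hr1 b hb he).trans (hpge b)
  have htr : ∀ b ∈ B, E i b → p b ≤ r b → Tight E F B p i b ∧ F i b (p b) = o := by
    intro b hb he hle
    have heq : p b = r b := le_antisymm hle (hrp b hb he)
    have : F i b (p b) = o := by rw [heq, hr]
    refine ⟨⟨hb, he, fun b' hb' he' => ?_⟩, this⟩
    rw [this, ← hr b']
    exact (hFa i b').antitone (hrp b' hb' he')
  refine ⟨p, fun b _ => (hp01 b).trans (hpge b), ?_, ?_⟩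
  · intro X hX hXne
    by_cases hx : ∀ j ∈ X, E i j → r j < p j
    · refine (hpC X hX hXne hx).trans (Finset.card_le_card ?_)
      intro a ha
      obtain ⟨haA, hb⟩ := Finset.mem_filter.1 ha
      exact Finset.mem_filter.2 ⟨Finset.mem_of_mem_erase haA, hb⟩
    · push Not at hx
      obtain ⟨j, hjX, hej, hle⟩ := hx
      have hti := (htr j (hX hjX) hej hle).1
      set W := A.erase i \ NA E F A B p X with hW
      have h1 := hNO W Finset.sdiff_subset
      have h2 : NB E F B p W ⊆ B \ X := by
        intro b hb
        obtain ⟨hbB, a, ha, hta⟩ := Finset.mem_filter.1 hb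
        obtain ⟨ha1, ha2⟩ := Finset.mem_sdiff.1 ha
        refine Finset.mem_sdiff.2 ⟨hbB, fun hbX => ha2 ?_⟩
        exact Finset.mem_filter.2 ⟨Finset.mem_of_mem_erase ha1, b, hbX, hta⟩
      have h3 := Finset.card_le_card h2
      have h4 := Finset.card_sdiff_add_card_eq_card hX
      have hiN : i ∈ NA E F A B p X := Finset.mem_filter.2 ⟨hi, j, hjX, hti⟩
      have h5 : W = A \ NA E F A B p X := by
        ext a
        simp only [hW, Finset.mem_sdiff, Finset.mem_erase]
        constructor
        · rintro ⟨⟨_, h⟩, h'⟩; exact ⟨h, h'⟩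
        · rintro ⟨h, h'⟩; exact ⟨⟨fun e => h' (e ▸ hiN), h⟩, h'⟩
      have hsub : NA E F A B p X ⊆ A := Finset.filter_subset _ _
      have h6 := Finset.card_sdiff_add_card_eq_card hsub
      rw [← h5] at h6
      omega
  · by_contra hcon
    have hx : ∀ j ∈ B, E i j → r j < p j := by
      intro j hj he
      by_contra hlt
      exact hcon ⟨j, htr j hj he (not_lt.1 hlt)⟩
    have h1 := hpC B subset_rfl hB hx
    have h2 : (NA E F (A.erase i) B p B).card ≤ (A.erase i).card :=
      Finset.card_le_card (Finset.filter_subset _ _)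
    omega

/-! ### From trees to surplus -/

lemma isAlt_cons {M : Finset (V × V)} {a b c : V} {l : List V} :
    IsAlternating M (a :: b :: c :: l) ↔
      (SymMem M (a, b) ↔ ¬ SymMem M (b, c)) ∧ IsAlternating M (b :: c :: l) :=
  List.isChain_cons_cons

lemma isAlt_tail {M : Finset (V × V)} {a : V} {l : List V}
    (h : IsAlternating M (a :: l)) : IsAlternating M l := by
  match l, h with
  | [], _ => exact List.isChain_nil
  | [b], _ => exact List.isChain_nil
  | b :: c :: l, h => exact (isAlt_cons.1 h).2

lemma alt_avoid {A B : Finset V} (hdisj : Disjoint A B) {T M : Finset (V × V)}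
    (hT : T ⊆ A ×ˢ B) (hM : M ⊆ A ×ˢ B) (Q R : V → Prop)
    (HN : ∀ a b, (a, b) ∈ T → R b → Q a) (HM : ∀ a b, (a, b) ∈ M → Q a → R b) :
    ∀ (l : List V) (a : V), a ∈ A → ¬ Q a → (∀ b l', l = b :: l' → ¬ SymMem M (a, b)) →
      (a :: l).IsChain (Adj T) → IsAlternating M (a :: l) → ∀ x ∈ l, x ∈ B → ¬ R x
  | [], _, _, _, _, _, _ => by simp
  | [b], a, ha, hQ, _, hch, _ => by
    intro x hx hxB hR
    simp only [List.mem_singleton] at hx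
    subst hx
    simp only [List.isChain_cons_cons] at hch
    rcases hch.1 with h | h
    · exact hQ (HN _ _ h hR)
    · exact Finset.disjoint_left.1 hdisj ha (Finset.mem_product.1 (hT h)).2
  | b :: a' :: l, a, ha, hQ, hf, hch, halt => by
    simp only [List.isChain_cons_cons] at hch
    obtain ⟨hab, hba', hch'⟩ := hch
    have hab : (a, b) ∈ T := by
      rcases hab with h | h
      · exact h
      · exact absurd (Finset.mem_product.1 (hT h)).2 (Finset.disjoint_left.1 hdisj ha)
    have hbB : b ∈ B := (Finset.mem_product.1 (hT hab)).2
    have hbR : ¬ R b := fun h => hQ (HN _ _ hab h)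
    have hba' : (a', b) ∈ T := by
      rcases hba' with h | h
      · exact absurd hbB (Finset.disjoint_left.1 hdisj (Finset.mem_product.1 (hT h)).1)
      · exact h
    have ha'A : a' ∈ A := (Finset.mem_product.1 (hT hba')).1
    obtain ⟨h1, h2⟩ := isAlt_cons.1 halt
    have hm : SymMem M (b, a') := by
      by_contra hn
      exact hf b _ rfl (h1.2 hn)
    have hm' : (a', b) ∈ M := by
      rcases hm with h | h
      · exact absurd hbB (Finset.disjoint_left.1 hdisj (Finset.mem_product.1 (hM h)).1)
      · exact h
    have hQa' : ¬ Q a' := fun h => hbR (HM _ _ hm' h)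
    have ih := alt_avoid hdisj hT hM Q R HN HM l a' ha'A hQa' (by
      rintro b' l' rfl
      exact (isAlt_cons.1 h2).1.1 hm) hch' (isAlt_tail h2)
    intro x hx hxB
    rcases List.mem_cons.1 hx with rfl | hx
    · exact hbR
    rcases List.mem_cons.1 hx with rfl | hx
    · exact absurd hxB (Finset.disjoint_left.1 hdisj ha'A)
    · exact ih x hx hxB

lemma tree_sur {A B : Finset V} (hdisj : Disjoint A B) (hcard : A.card = B.card + 1)
    {G M T : Finset (V × V)} {r : V} (hG : G ⊆ A ×ˢ B) (hMm : IsMatching M) (hM : M ⊆ G)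
    (hT : T ⊆ G) (hAlt : IsAltTreeOn T M r (A ∪ B)) :
    ∀ S ⊆ B, S.Nonempty → S.card + 1 ≤ (A.filter fun a => ∃ b ∈ S, (a, b) ∈ G).card := by
  obtain ⟨htree, hr, hrM, hmat, halt, _⟩ := hAlt
  have hMA : ∀ a b, (a, b) ∈ M → a ∈ A ∧ b ∈ B := fun a b h =>
    Finset.mem_product.1 (hG (hM h))
  have hmatA : ∀ a ∈ A, a ≠ r → ∃ b ∈ B, (a, b) ∈ M := by
    intro a ha har
    obtain ⟨⟨x, y⟩, he, h | h⟩ := hmat a (Finset.mem_union_left _ ha) har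
    · simp only at h; subst h; exact ⟨y, (hMA _ _ he).2, he⟩
    · simp only at h; subst h
      exact absurd (hMA _ _ he).2 (Finset.disjoint_left.1 hdisj ha)
  have hmatB : ∀ b ∈ B, b ≠ r → ∃ a ∈ A, (a, b) ∈ M := by
    intro b hb hbr
    obtain ⟨⟨x, y⟩, he, h | h⟩ := hmat b (Finset.mem_union_right _ hb) hbr
    · simp only at h; subst h
      exact absurd hb (Finset.disjoint_left.1 hdisj (hMA _ _ he).1)
    · simp only at h; subst h; exact ⟨x, (hMA _ _ he).1, he⟩
  have huR : ∀ a b b', (a, b) ∈ M → (a, b') ∈ M → b = b' := by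
    intro a b b' h h'
    by_contra hne
    exact (hMm _ h _ h' (by simp [hne])).1 rfl
  have huL : ∀ a a' b, (a, b) ∈ M → (a', b) ∈ M → a = a' := by
    intro a a' b h h'
    by_contra hne
    exact (hMm _ h _ h' (by simp [hne])).2.2.2 rfl
  have hrA : r ∈ A := by
    by_contra hrA
    have hne : ∀ a ∈ A, ∃ b ∈ B, (a, b) ∈ M := fun a ha =>
      hmatA a ha (fun h => hrA (h ▸ ha))
    choose! g hgB hgM using hne
    have := Finset.card_le_card_of_injOn g hgB (fun a ha a' ha' h => by
      have h1 := hgM a ha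
      have h2 := hgM a' ha'
      rw [h] at h1
      exact huL _ _ _ h1 h2)
    omega
  have hne : ∀ b ∈ B, ∃ a ∈ A, (a, b) ∈ M := fun b hb =>
    hmatB b hb (fun h => Finset.disjoint_left.1 hdisj hrA (h ▸ hb))
  choose! f hfA hfM using hne
  intro S hS hSne
  have hinj : Set.InjOn f S := by
    intro b hb b' hb' h
    have h1 := hfM b (hS hb)
    have h2 := hfM b' (hS hb')
    rw [h] at h1
    exact huR _ _ _ h1 h2
  have hsub : S.image f ⊆ A.filter fun a => ∃ b ∈ S, (a, b) ∈ G := by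
    intro a ha
    obtain ⟨b, hb, rfl⟩ := Finset.mem_image.1 ha
    exact Finset.mem_filter.2 ⟨hfA b (hS hb), b, hb, hM (hfM b (hS hb))⟩
  have hci := Finset.card_image_of_injOn hinj
  by_contra hcon
  have heq := Finset.eq_of_subset_of_card_le hsub (by omega)
  obtain ⟨s, hs⟩ := hSne
  obtain ⟨p, hp, -⟩ := htree.2 r hr s (Finset.mem_union_right _ (hS hs))
  have hpa := halt s (Finset.mem_union_right _ (hS hs)) p hp
  obtain ⟨h1, h2, h3, h4⟩ := hp
  obtain ⟨l, rfl⟩ : ∃ l, p = r :: l := by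
    cases p with
    | nil => simp at h1
    | cons x l => simp at h1; exact ⟨l, by rw [h1]⟩
  have hsl : s ∈ l := by
    have := List.mem_of_getLast? h2
    rcases List.mem_cons.1 this with h | h
    · exact absurd (h ▸ hS hs) (Finset.disjoint_left.1 hdisj hrA)
    · exact h
  refine alt_avoid hdisj (hT.trans hG) (hM.trans hG) (fun a => a ∈ S.image f) (fun b => b ∈ S)
    ?_ ?_ l r hrA ?_ ?_ h4 hpa s hsl (hS hs) hs
  · intro a b hab hb
    rw [heq]
    exact Finset.mem_filter.2 ⟨(Finset.mem_product.1 (hG (hT hab))).1, b, hb, hT hab⟩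
  · intro a b hab ha
    obtain ⟨b', hb', rfl⟩ := Finset.mem_image.1 ha
    rw [huR _ _ _ hab (hfM b' (hS hb'))]
    exact hb'
  · intro hh
    obtain ⟨b', hb', hfr⟩ := Finset.mem_image.1 hh
    exact hrM ⟨_, hfM b' (hS hb'), Or.inl hfr⟩
  · rintro b l' - (h | h)
    · exact hrM ⟨_, h, Or.inl rfl⟩
    · exact hrM ⟨_, h, Or.inr rfl⟩

/-! ### Rooted trees -/

lemma adj_symm {T : Finset (V × V)} {x y : V} (h : Adj T x y) : Adj T y x := Or.symm h

lemma IsPath.rev {T : Finset (V × V)} {p : List V} {x y : V} (h : IsPath T p x y) :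
    IsPath T p.reverse y x := by
  obtain ⟨h1, h2, h3, h4⟩ := h
  refine ⟨by simpa using h2, by simpa using h1, by simpa using h3, ?_⟩
  show List.IsChain _ _
  rw [List.isChain_reverse]
  exact List.IsChain.imp (fun _ _ h => adj_symm h) h4

lemma cons_path {T : Finset (V × V)} {p : List V} {a x y : V} (ha : Adj T a x)
    (h : IsPath T p x y) : ∃ p', IsPath T p' a y := by
  obtain ⟨h1, h2, h3, h4⟩ := h
  by_cases hap : a ∈ p
  · obtain ⟨s, t, rfl⟩ := List.append_of_mem hap
    refine ⟨a :: t, rfl, ?_, ?_, ?_⟩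
    · rw [← h2]; simp [List.getLast?_append, List.getLast?_cons]
    · exact (List.nodup_append.1 h3).2.1
    · exact (List.isChain_append.1 h4).2.1
  · cases p with
    | nil => simp at h1
    | cons z l =>
      simp only [List.head?_cons, Option.some.injEq] at h1
      subst h1
      refine ⟨a :: z :: l, rfl, ?_, List.nodup_cons.2 ⟨hap, h3⟩, ?_⟩
      · rw [← h2]; simp
      · exact List.isChain_cons_cons.2 ⟨ha, h4⟩

lemma down_list {T : Finset (V × V)} {r : V} {par : V → V} {ρ : V → ℕ}
    (hadj : ∀ x y, Adj T x y → (x ≠ r ∧ par x = y ∧ ρ y < ρ x) ∨ (y ≠ r ∧ par y = x ∧ ρ x < ρ y)) :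
    ∀ (l : List V) (x y : V), par y = x → ρ x < ρ y → (x :: y :: l).Nodup →
      (x :: y :: l).IsChain (Adj T) → ∀ z ∈ y :: l, ρ x < ρ z
  | [], x, y, _, hr, _, _ => by
    intro z hz
    simp only [List.mem_singleton] at hz
    subst hz; exact hr
  | w :: l, x, y, hp, hr, hn, hch => by
    intro z hz
    rcases List.mem_cons.1 hz with rfl | hz
    · exact hr
    have hch2 := (List.isChain_cons_cons.1 hch).2
    rcases hadj y w (List.isChain_cons_cons.1 hch2).1 with h | h
    · exfalso
      have : x = w := hp.symm.trans h.2.1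
      subst this
      simp at hn
    · exact hr.trans (down_list hadj l y w h.2.1 h.2.2 (List.nodup_cons.1 hn).2 hch2 z hz)

lemma path_step {T : Finset (V × V)} {r : V} {par : V → V} {ρ : V → ℕ}
    (hadj : ∀ x y, Adj T x y → (x ≠ r ∧ par x = y ∧ ρ y < ρ x) ∨ (y ≠ r ∧ par y = x ∧ ρ x < ρ y))
    {p : List V} {x y : V} (h : IsPath T p x y) (hxy : x ≠ y) (hle : ρ y ≤ ρ x) :
    ∃ t, p = x :: t ∧ IsPath T t (par x) y ∧ ρ (par x) < ρ x := by
  obtain ⟨h1, h2, h3, h4⟩ := h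
  match p, h1, h2, h3, h4 with
  | [], h1, _, _, _ => simp at h1
  | [z], h1, h2, _, _ => simp at h1 h2; exact absurd (h1.symm.trans h2) hxy
  | z :: w :: l, h1, h2, h3, h4 =>
    simp only [List.head?_cons, Option.some.injEq] at h1
    subst h1
    have h2' : (w :: l).getLast? = some y := by rw [← h2]; simp
    rcases hadj z w (List.isChain_cons_cons.1 h4).1 with h | h
    · refine ⟨w :: l, rfl, ⟨by simp [h.2.1], h2', (List.nodup_cons.1 h3).2,
        (List.isChain_cons_cons.1 h4).2⟩, ?_⟩
      rw [h.2.1]; exact h.2.2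
    · have := down_list hadj l z w h.2.1 h.2.2 h3 h4 y (List.mem_of_getLast? h2')
      omega

lemma path_self {T : Finset (V × V)} {p : List V} {x : V} (h : IsPath T p x x) : p = [x] := by
  obtain ⟨h1, h2, h3, h4⟩ := h
  match p, h1, h2, h3 with
  | [], h1, _, _ => simp at h1
  | [z], h1, _, _ => simpa using h1
  | z :: w :: l, h1, h2, h3 =>
    simp only [List.head?_cons, Option.some.injEq] at h1
    subst h1
    have h2' : (w :: l).getLast? = some z := by rw [← h2]; simp
    exact absurd (List.mem_of_getLast? h2') (List.nodup_cons.1 h3).1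

lemma path_unique {T : Finset (V × V)} {r : V} {par : V → V} {ρ : V → ℕ}
    (hadj : ∀ x y, Adj T x y → (x ≠ r ∧ par x = y ∧ ρ y < ρ x) ∨ (y ≠ r ∧ par y = x ∧ ρ x < ρ y))
    (n : ℕ) : ∀ (x y : V) (p q : List V), ρ x + ρ y = n → IsPath T p x y → IsPath T q x y →
      p = q := by
  induction n using Nat.strong_induction_on with
  | _ n IH =>
  intro x y p q hn hp hq
  by_cases hxy : x = y
  · subst hxy; rw [path_self hp, path_self hq]
  rcases le_total (ρ y) (ρ x) with hle | hle
  · obtain ⟨t, rfl, ht, hlt⟩ := path_step hadj hp hxy hle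
    obtain ⟨s, rfl, hs, _⟩ := path_step hadj hq hxy hle
    rw [IH (ρ (par x) + ρ y) (by omega) _ _ t s rfl ht hs]
  · obtain ⟨t, h1, ht, hlt⟩ := path_step hadj hp.rev (Ne.symm hxy) hle
    obtain ⟨s, h2, hs, _⟩ := path_step hadj hq.rev (Ne.symm hxy) hle
    have := IH (ρ (par y) + ρ x) (by omega) _ _ t s rfl ht hs
    rw [← List.reverse_inj, h1, h2, this]

lemma tree_of_par {T : Finset (V × V)} {X : Finset V} {r : V} {par : V → V} {ρ : V → ℕ}
    (hTX : ∀ e ∈ T, e.1 ∈ X ∧ e.2 ∈ X)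
    (hadj : ∀ x y, Adj T x y → (x ≠ r ∧ par x = y ∧ ρ y < ρ x) ∨ (y ≠ r ∧ par y = x ∧ ρ x < ρ y))
    (hpar : ∀ x ∈ X, x ≠ r → par x ∈ X ∧ Adj T x (par x) ∧ ρ (par x) < ρ x) :
    IsTreeOn T X := by
  have hself : ∀ x, IsPath T [x] x x := fun x =>
    ⟨rfl, rfl, List.nodup_singleton x, List.isChain_singleton x⟩
  have hroot : ∀ n, ∀ x ∈ X, ρ x = n → ∃ p, IsPath T p x r := by
    intro n
    induction n using Nat.strong_induction_on with
    | _ n IH =>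
    intro x hx hn
    by_cases hxr : x = r
    · subst hxr; exact ⟨_, hself x⟩
    obtain ⟨h1, h2, h3⟩ := hpar x hx hxr
    obtain ⟨p, hp⟩ := IH _ (hn ▸ h3) _ h1 rfl
    exact cons_path h2 hp
  have hall : ∀ y ∈ X, ∀ n, ∀ x ∈ X, ρ x = n → ∃ p, IsPath T p x y := by
    intro y hy n
    induction n using Nat.strong_induction_on with
    | _ n IH =>
    intro x hx hn
    by_cases hxr : x = r
    · subst hxr
      obtain ⟨p, hp⟩ := hroot _ y hy rfl
      exact ⟨_, hp.rev⟩
    obtain ⟨h1, h2, h3⟩ := hpar x hx hxr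
    obtain ⟨p, hp⟩ := IH _ (hn ▸ h3) _ h1 rfl
    exact cons_path h2 hp
  refine ⟨hTX, fun x hx y hy => ?_⟩
  obtain ⟨p, hp⟩ := hall y hy _ x hx rfl
  exact ⟨p, hp, fun q hq => path_unique hadj _ x y q p rfl hq hp⟩

/-! ### From surplus to trees -/

lemma alt_of_path {A B : Finset V} (hdisj : Disjoint A B) {T M : Finset (V × V)} {f π : V → V}
    (hT : ∀ x y, (x, y) ∈ T ↔ y ∈ B ∧ (x = f y ∨ x = π y))
    (hTA : ∀ x y, (x, y) ∈ T → x ∈ A)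
    (hM : ∀ x y, (x, y) ∈ M ↔ y ∈ B ∧ x = f y)
    (hinj : ∀ b ∈ B, ∀ b' ∈ B, f b = f b' → b = b') :
    ∀ (l : List V) (a : V), a ∈ A → (∀ b l', l = b :: l' → ¬ SymMem M (a, b)) →
      (a :: l).Nodup → (a :: l).IsChain (Adj T) → IsAlternating M (a :: l)
  | [], _, _, _, _, _ => List.isChain_nil
  | [b], _, _, _, _, _ => List.isChain_singleton _
  | b :: a' :: l, a, ha, hf, hn, hch => by
    obtain ⟨hab, hch1⟩ := List.isChain_cons_cons.1 hch
    obtain ⟨hba', hch2⟩ := List.isChain_cons_cons.1 hch1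
    have hAB : ∀ x, x ∈ A → x ∉ B := fun x hx => Finset.disjoint_left.1 hdisj hx
    have hab : (a, b) ∈ T := by
      rcases hab with h | h
      · exact h
      · exact absurd ((hT _ _).1 h).1 (hAB a ha)
    have hbB : b ∈ B := ((hT _ _).1 hab).1
    have hba' : (a', b) ∈ T := by
      rcases hba' with h | h
      · exact absurd hbB (hAB b (hTA _ _ h))
      · exact h
    have ha'A : a' ∈ A := hTA _ _ hba'
    have hnm : ¬ SymMem M (a, b) := hf b _ rfl
    have hafb : a ≠ f b := fun h => hnm (Or.inl ((hM _ _).2 ⟨hbB, h⟩))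
    have haπ : a = π b := (((hT _ _).1 hab).2).resolve_left hafb
    have haa' : a ≠ a' := by
      rintro rfl
      simp at hn
    have ha'f : a' = f b := (((hT _ _).1 hba').2).resolve_right fun h => haa' (haπ.trans h.symm)
    have hm : SymMem M (b, a') := Or.inr ((hM _ _).2 ⟨hbB, ha'f⟩)
    have hn2 := (List.nodup_cons.1 hn).2
    have hnext : ∀ b' l', l = b' :: l' → ¬ SymMem M (a', b') := by
      rintro b' l' rfl (h | h)
      · obtain ⟨hb'B, h⟩ := (hM _ _).1 h
        have : b = b' := hinj b hbB b' hb'B (ha'f.symm.trans h)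
        subst this
        simp at hn2
      · exact hAB a' ha'A ((hM _ _).1 h).1
    have ih := alt_of_path hdisj hT hTA hM hinj l a' ha'A hnext (List.nodup_cons.1 hn2).2 hch2
    refine isAlt_cons.2 ⟨⟨fun h => absurd h hnm, fun h => absurd hm h⟩, ?_⟩
    cases l with
    | nil => exact List.isChain_singleton _
    | cons b' l => exact isAlt_cons.2 ⟨⟨fun _ => hnext b' l rfl, fun _ => hm⟩, ih⟩

lemma path_parity {A B : Finset V} (hdisj : Disjoint A B) {T : Finset (V × V)}
    (hT : T ⊆ A ×ˢ B) : ∀ (l : List V) (x y : V), (x :: l).IsChain (Adj T) →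
      (x :: l).getLast? = some y → (y ∈ A ↔ (Even l.length ↔ x ∈ A))
  | [], x, y, _, h => by simp at h; subst h; simp
  | z :: l, x, y, hch, h => by
    obtain ⟨h1, h2⟩ := List.isChain_cons_cons.1 hch
    have ih := path_parity hdisj hT l z y h2 (by rw [← h]; simp)
    have hxz : z ∈ A ↔ x ∉ A := by
      rcases h1 with h1 | h1
      · have := Finset.mem_product.1 (hT h1)
        have h3 := Finset.disjoint_right.1 hdisj this.2
        simp only at this h3; tauto
      · have := Finset.mem_product.1 (hT h1)
        have h3 := Finset.disjoint_right.1 hdisj this.2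
        simp only at this h3; tauto
    rw [ih, List.length_cons, Nat.even_add_one]
    tauto

lemma sur_tree {A B : Finset V} (hdisj : Disjoint A B) (hcard : A.card = B.card + 1)
    {G : Finset (V × V)} (hG : G ⊆ A ×ˢ B)
    (hS : ∀ S ⊆ B, S.Nonempty → S.card + 1 ≤ (A.filter fun a => ∃ b ∈ S, (a, b) ∈ G).card) :
    ∃ M T r, IsMatching M ∧ M ⊆ G ∧ NearPerfect M (A ∪ B) ∧ T ⊆ G ∧
      IsAltTreeOn T M r (A ∪ B) := by
  have hAB : ∀ x, x ∈ A → x ∉ B := fun x hx => Finset.disjoint_left.1 hdisj hx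
  -- Hall matching
  obtain ⟨f, hfA, hfG, hinj⟩ : ∃ f : V → V, (∀ b ∈ B, f b ∈ A) ∧ (∀ b ∈ B, (f b, b) ∈ G) ∧
      ∀ b ∈ B, ∀ b' ∈ B, f b = f b' → b = b' := by
    obtain ⟨g, hg1, hg2⟩ := (Finset.all_card_le_biUnion_card_iff_exists_injective
      (fun b : B => A.filter fun a => (a, b.1) ∈ G)).1 (by
        intro s
        rcases s.eq_empty_or_nonempty with rfl | hne
        · simp
        have h1 := hS (s.image Subtype.val) (by
          intro x hx; obtain ⟨y, _, rfl⟩ := Finset.mem_image.1 hx; exact y.2) (hne.image _)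
        rw [Finset.card_image_of_injective _ Subtype.val_injective] at h1
        refine (Nat.le_of_succ_le h1).trans (Finset.card_le_card ?_)
        intro a ha
        obtain ⟨haA, b, hb, hab⟩ := Finset.mem_filter.1 ha
        obtain ⟨y, hy, rfl⟩ := Finset.mem_image.1 hb
        exact Finset.mem_biUnion.2 ⟨y, hy, Finset.mem_filter.2 ⟨haA, hab⟩⟩)
    refine ⟨fun b => if h : b ∈ B then g ⟨b, h⟩ else b, ?_, ?_, ?_⟩
    · intro b hb; simp only [hb, dif_pos]; exact (Finset.mem_filter.1 (hg2 ⟨b, hb⟩)).1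
    · intro b hb; simp only [hb, dif_pos]; exact (Finset.mem_filter.1 (hg2 ⟨b, hb⟩)).2
    · intro b hb b' hb' h
      simp only [hb, hb', dif_pos] at h
      simpa using hg1 h
  have hfim : B.image f ⊆ A := by
    intro a ha; obtain ⟨b, hb, rfl⟩ := Finset.mem_image.1 ha; exact hfA b hb
  have hfc : (B.image f).card = B.card := Finset.card_image_of_injOn hinj
  have hd := Finset.card_sdiff_add_card_eq_card hfim
  obtain ⟨r, hr⟩ : ∃ r, A \ B.image f = {r} := Finset.card_eq_one.1 (by omega)
  have hr' : r ∈ A \ B.image f := by rw [hr]; simp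
  have hrA : r ∈ A := (Finset.mem_sdiff.1 hr').1
  have hrf : ∀ b ∈ B, f b ≠ r := fun b hb h =>
    (Finset.mem_sdiff.1 hr').2 (Finset.mem_image.2 ⟨b, hb, h⟩)
  have hcov : ∀ a ∈ A, a ≠ r → ∃ b ∈ B, f b = a := by
    intro a ha har
    by_contra hcon
    have : a ∈ A \ B.image f := Finset.mem_sdiff.2 ⟨ha, fun h => hcon (by simpa using h)⟩
    rw [hr] at this
    exact har (by simpa using this)
  -- levels
  let Lv : ℕ → V → Prop := fun n => Nat.rec (motive := fun _ => V → Prop) (fun b => b ∈ B ∧ (r, b) ∈ G)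
    (fun _ P b => b ∈ B ∧ ∃ b' ∈ B, P b' ∧ (f b', b) ∈ G) n
  have hLv : ∀ b ∈ B, ∃ n, Lv n b := by
    intro b0 hb0
    by_contra hb0n
    have hb0n : ∀ n, ¬ Lv n b0 := not_exists.1 hb0n
    set U := B.filter fun b => ∀ n, ¬ Lv n b with hU
    have hUB : U ⊆ B := Finset.filter_subset _ _
    have h1 := hS U hUB ⟨b0, Finset.mem_filter.2 ⟨hb0, hb0n⟩⟩
    have h2 : (U.image f).card ≤ U.card := Finset.card_image_le
    obtain ⟨a, ha, haU⟩ := Finset.exists_mem_notMem_of_card_lt_card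
      (lt_of_le_of_lt h2 (Nat.lt_of_succ_le h1))
    obtain ⟨haA, b, hb, hab⟩ := Finset.mem_filter.1 ha
    obtain ⟨hbB, hbn⟩ := Finset.mem_filter.1 hb
    by_cases har : a = r
    · subst har; exact hbn 0 ⟨hbB, hab⟩
    · obtain ⟨b', hb', rfl⟩ := hcov a haA har
      have : ∃ n, Lv n b' := by
        by_contra hcon
        exact haU (Finset.mem_image.2 ⟨b', Finset.mem_filter.2 ⟨hb', not_exists.1 hcon⟩, rfl⟩)
      obtain ⟨n, hn⟩ := this
      exact hbn (n + 1) ⟨hbB, b', hb', hn, hab⟩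
  let d : V → ℕ := fun b => if h : ∃ n, Lv n b then Nat.find h else 0
  have hdle : ∀ b n, Lv n b → d b ≤ n := by
    intro b n hn
    have hex : ∃ n, Lv n b := ⟨n, hn⟩
    simp only [d, hex, dif_pos]
    exact Nat.find_min' hex hn
  have hdL : ∀ b ∈ B, Lv (d b) b := by
    intro b hb
    have hex := hLv b hb
    simp only [d, hex, dif_pos]
    exact Nat.find_spec hex
  have hπ : ∀ b, ∃ a, b ∈ B → (a ∈ A ∧ (a, b) ∈ G ∧ a ≠ f b ∧
      (a = r ∨ ∃ b' ∈ B, d b' < d b ∧ a = f b')) := by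
    intro b
    by_cases hb : b ∈ B
    · have h1 := hdL b hb
      rcases hdb : d b with _ | n
      · rw [hdb] at h1
        exact ⟨r, fun _ => ⟨hrA, h1.2, (hrf b hb).symm, Or.inl rfl⟩⟩
      · rw [hdb] at h1
        obtain ⟨_, b', hb', hn, hG'⟩ := h1
        have hlt : d b' < n + 1 := Nat.lt_succ_of_le (hdle _ _ hn)
        refine ⟨f b', fun _ => ⟨hfA b' hb', hG', fun h => ?_, Or.inr ⟨b', hb', hlt, rfl⟩⟩⟩
        have := hinj _ hb' _ hb h
        subst this
        omega
    · exact ⟨b, fun h => absurd h hb⟩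
  choose π hπ using hπ
  set M : Finset (V × V) := B.image fun b => (f b, b) with hMdef
  set T : Finset (V × V) := M ∪ B.image fun b => (π b, b) with hTdef
  have hM : ∀ x y, (x, y) ∈ M ↔ y ∈ B ∧ x = f y := by
    intro x y
    simp only [hMdef, Finset.mem_image, Prod.mk.injEq]
    constructor
    · rintro ⟨b, hb, rfl, rfl⟩; exact ⟨hb, rfl⟩
    · rintro ⟨hb, rfl⟩; exact ⟨y, hb, rfl, rfl⟩
  have hT : ∀ x y, (x, y) ∈ T ↔ y ∈ B ∧ (x = f y ∨ x = π y) := by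
    intro x y
    rw [hTdef, Finset.mem_union, hM]
    simp only [Finset.mem_image, Prod.mk.injEq]
    constructor
    · rintro (⟨h1, h2⟩ | ⟨b, hb, rfl, rfl⟩)
      · exact ⟨h1, Or.inl h2⟩
      · exact ⟨hb, Or.inr rfl⟩
    · rintro ⟨hb, rfl | rfl⟩
      · exact Or.inl ⟨hb, rfl⟩
      · exact Or.inr ⟨y, hb, rfl, rfl⟩
  have hMG : M ⊆ G := by
    rintro ⟨x, y⟩ h
    obtain ⟨h1, rfl⟩ := (hM _ _).1 h
    exact hfG y h1
  have hTG : T ⊆ G := by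
    rintro ⟨x, y⟩ h
    obtain ⟨h1, rfl | rfl⟩ := (hT _ _).1 h
    · exact hfG y h1
    · exact (hπ y h1).2.1
  have hTA : ∀ x y, (x, y) ∈ T → x ∈ A := fun x y h => (Finset.mem_product.1 (hG (hTG h))).1
  have hrM : ¬ Matched M r := by
    rintro ⟨⟨x, y⟩, h, h1 | h1⟩
    · simp only at h1; subst h1
      obtain ⟨hy, h2⟩ := (hM _ _).1 h
      exact hrf y hy h2.symm
    · simp only at h1; subst h1
      exact hAB _ hrA ((hM _ _).1 h).1
  have hmat : ∀ x ∈ A ∪ B, x ≠ r → Matched M x := by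
    intro x hx hxr
    rcases Finset.mem_union.1 hx with hx | hx
    · obtain ⟨b, hb, rfl⟩ := hcov x hx hxr
      exact ⟨(f b, b), (hM _ _).2 ⟨hb, rfl⟩, Or.inl rfl⟩
    · exact ⟨(f x, x), (hM _ _).2 ⟨hx, rfl⟩, Or.inr rfl⟩
  -- parents and ranks
  have hinv : ∀ a, ∃ b, a ∈ A → a ≠ r → b ∈ B ∧ f b = a := by
    intro a
    by_cases h : a ∈ A ∧ a ≠ r
    · obtain ⟨b, hb, hab⟩ := hcov a h.1 h.2
      exact ⟨b, fun _ _ => ⟨hb, hab⟩⟩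
    · exact ⟨a, fun h1 h2 => absurd ⟨h1, h2⟩ h⟩
  choose inv hinv using hinv
  have hinvf : ∀ b ∈ B, inv (f b) = b := fun b hb =>
    hinj _ (hinv _ (hfA b hb) (hrf b hb)).1 _ hb (hinv _ (hfA b hb) (hrf b hb)).2
  let par : V → V := fun x => if x ∈ B then π x else inv x
  let ρ : V → ℕ := fun x => if x ∈ B then 2 * d x + 1 else if x = r then 0 else 2 * d (inv x) + 2
  have hparB : ∀ b ∈ B, par b = π b := fun b hb => by simp only [par, hb, if_true]
  have hparf : ∀ b ∈ B, par (f b) = b := fun b hb => by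
    simp only [par, hAB _ (hfA b hb), if_false]; exact hinvf b hb
  have hρB : ∀ b ∈ B, ρ b = 2 * d b + 1 := fun b hb => by simp only [ρ, hb, if_true]
  have hρf : ∀ b ∈ B, ρ (f b) = 2 * d b + 2 := fun b hb => by
    simp only [ρ, hAB _ (hfA b hb), if_false, hrf b hb, hinvf b hb]
  have hρr : ρ r = 0 := by simp only [ρ, hAB _ hrA, if_false, if_true]
  have hρπ : ∀ b ∈ B, ρ (π b) < ρ b := by
    intro b hb
    rw [hρB b hb]
    rcases (hπ b hb).2.2.2 with h | ⟨b', hb', hlt, h⟩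
    · rw [h, hρr]; omega
    · rw [h, hρf b' hb']; omega
  have hBr : ∀ b ∈ B, b ≠ r := fun b hb h => hAB r hrA (h ▸ hb)
  have hone : ∀ x y, (x, y) ∈ T →
      (x ≠ r ∧ par x = y ∧ ρ y < ρ x) ∨ (y ≠ r ∧ par y = x ∧ ρ x < ρ y) := by
    intro x y h
    obtain ⟨hy, rfl | rfl⟩ := (hT _ _).1 h
    · left; exact ⟨hrf y hy, hparf y hy, by rw [hρB y hy, hρf y hy]; omega⟩
    · right; exact ⟨hBr y hy, hparB y hy, hρπ y hy⟩
  have htree : IsTreeOn T (A ∪ B) := by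
    refine tree_of_par (r := r) (par := par) (ρ := ρ) ?_ ?_ ?_
    · intro e he
      have := Finset.mem_product.1 (hG (hTG he))
      exact ⟨Finset.mem_union_left _ this.1, Finset.mem_union_right _ this.2⟩
    · rintro x y (h | h)
      · exact hone x y h
      · exact (hone y x h).symm
    · intro x hx hxr
      rcases Finset.mem_union.1 hx with hx | hx
      · obtain ⟨b, hb, rfl⟩ := hcov x hx hxr
        rw [hparf b hb]
        refine ⟨Finset.mem_union_right _ hb, Or.inl ((hT _ _).2 ⟨hb, Or.inl rfl⟩), ?_⟩
        rw [hρB b hb, hρf b hb]; omega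
      · rw [hparB x hx]
        exact ⟨Finset.mem_union_left _ (hπ x hx).1, Or.inr ((hT _ _).2 ⟨hx, Or.inr rfl⟩), hρπ x hx⟩
  have hdeg : ∀ b ∈ B, degr T b = 2 := by
    intro b hb
    have : (T.filter fun e => e.1 = b ∨ e.2 = b) = {(f b, b), (π b, b)} := by
      ext ⟨x, y⟩
      simp only [Finset.mem_filter, Finset.mem_insert, Finset.mem_singleton, Prod.mk.injEq, hT]
      constructor
      · rintro ⟨⟨hy, hx⟩, rfl | rfl⟩
        · exact absurd hb (hAB _ (hTA _ _ ((hT x y).2 ⟨hy, hx⟩)))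
        · tauto
      · rintro (⟨rfl, rfl⟩ | ⟨rfl, rfl⟩)
        · exact ⟨⟨hb, Or.inl rfl⟩, Or.inr rfl⟩
        · exact ⟨⟨hb, Or.inr rfl⟩, Or.inr rfl⟩
    rw [degr]
    refine Eq.trans (congrArg _ ?_) (Finset.card_pair (a := (f b, b)) (b := (π b, b)) ?_)
    · rw [← this]
    · intro h
      exact (hπ b hb).2.2.1 (by simpa using h.symm)
  refine ⟨M, T, r, ?_, hMG, ?_, hTG, htree, Finset.mem_union_left _ hrA, hrM, hmat, ?_, ?_⟩
  · rintro ⟨x, y⟩ h ⟨x', y'⟩ h' hne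
    obtain ⟨hy, rfl⟩ := (hM _ _).1 h
    obtain ⟨hy', rfl⟩ := (hM _ _).1 h'
    have hyy : y ≠ y' := by rintro rfl; exact hne rfl
    refine ⟨fun h => hyy (hinj _ hy _ hy' h), fun h => ?_, fun h => ?_, hyy⟩
    · simp only at h; exact hAB _ (hfA y hy) (h ▸ hy')
    · simp only at h; exact hAB _ (hfA y' hy') (h ▸ hy)
  · refine ⟨r, ⟨Finset.mem_union_left _ hrA, hrM⟩, fun x hx => ?_⟩
    by_contra hxr
    exact hx.2 (hmat x hx.1 hxr)
  · intro x hx p hp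
    obtain ⟨h1, h2, h3, h4⟩ := hp
    cases p with
    | nil => simp at h1
    | cons z l =>
      simp only [List.head?_cons, Option.some.injEq] at h1
      subst h1
      refine alt_of_path hdisj hT hTA hM hinj l z hrA ?_ h3 h4
      rintro b l' - (h | h)
      · exact hrM ⟨_, h, Or.inl rfl⟩
      · exact hrM ⟨_, h, Or.inr rfl⟩
  · intro x hx p hp
    obtain ⟨h1, h2, h3, h4⟩ := hp
    cases p with
    | nil => simp at h1
    | cons z l =>
      simp only [List.head?_cons, Option.some.injEq] at h1
      subst h1
      have hpar := path_parity hdisj (hTG.trans hG) l z x h4 h2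
      simp only [hrA, iff_true] at hpar
      simp only [List.length_cons, Nat.add_sub_cancel]
      constructor
      · intro hodd
        rcases Finset.mem_union.1 hx with hx | hx
        · exact absurd (hpar.1 hx) (Nat.not_even_iff_odd.2 hodd)
        · exact hdeg x hx
      · intro hd1
        rcases Finset.mem_union.1 hx with hx | hx
        · exact hpar.1 hx
        · rw [hdeg x hx] at hd1; omega

theorem sastg_aux [Fintype V]
    (A B : Finset V) (E : Finset (V × V)) (hdisj : Disjoint A B) (hB : B.Nonempty)
    (hE : E ⊆ A ×ˢ B)
    (v : V → V → ℝ → ℝ)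
    (hvC : ∀ e ∈ E, Continuous (v e.2 e.1) ∧ Continuous (v e.1 e.2))
    (hvA : ∀ e ∈ E, StrictAnti (v e.2 e.1) ∧ StrictAnti (v e.1 e.2))
    (hvInv : ∀ e ∈ E, (∀ x, v e.1 e.2 (v e.2 e.1 x) = x) ∧ (∀ x, v e.2 e.1 (v e.1 e.2 x) = x))
    (hcard : A.card = B.card + 1)
    (O : V → ℝ) (hO : SASTG A B E v O) :
    ∀ i ∈ A, ∀ o ≤ O i, ∃ O' : V → ℝ, SASTG A B E v O' ∧ O' i = o := by
  obtain ⟨hst, M, T, r, hMm, hMG, -, hTG, hAlt⟩ := hO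
  intro i hi o ho
  have hEQ : ∀ O : V → ℝ, EQg E v O ⊆ A ×ˢ B := fun O =>
    (Finset.filter_subset _ _).trans hE
  let R : V → V → Prop := fun a b => (a, b) ∈ E
  let F : V → V → ℝ → ℝ := fun a b x => if (a, b) ∈ E then v a b x else -x
  have hF : ∀ a b, (a, b) ∈ E → F a b = v a b := by
    intro a b h; funext x; simp only [F, h, if_true]
  have hF' : ∀ a b, (a, b) ∉ E → F a b = fun x => -x := by
    intro a b h; funext x; simp only [F, h, if_false]
  have hFc : ∀ a b, Continuous (F a b) := by
    intro a b
    by_cases h : (a, b) ∈ E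
    · rw [hF a b h]; exact (hvC _ h).2
    · rw [hF' a b h]; exact continuous_neg
  have hFa : ∀ a b, StrictAnti (F a b) := by
    intro a b
    by_cases h : (a, b) ∈ E
    · rw [hF a b h]; exact (hvA _ h).2
    · rw [hF' a b h]; intro x y hxy; simpa using hxy
  have hFs : ∀ a b, Function.Surjective (F a b) := by
    intro a b
    by_cases h : (a, b) ∈ E
    · rw [hF a b h]; exact fun x => ⟨_, (hvInv _ h).1 x⟩
    · rw [hF' a b h]; exact fun x => ⟨-x, neg_neg x⟩
  have hle : ∀ a b, (a, b) ∈ E → ∀ x y, v b a x ≤ y ↔ v a b y ≤ x := by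
    intro a b h x y
    have h1 := (hvInv _ h).1 x
    simp only at h1
    conv_rhs => rw [← h1]
    exact ((hvA _ h).2.le_iff_ge).symm
  have heq : ∀ a b, (a, b) ∈ E → ∀ x y, y = v b a x ↔ v a b y = x := by
    intro a b h x y
    constructor
    · rintro rfl; exact (hvInv _ h).1 x
    · rintro rfl; exact ((hvInv _ h).2 y).symm
  have hmemEQ : ∀ (O : V → ℝ) a b, (a, b) ∈ EQg E v O ↔ (a, b) ∈ E ∧ v a b (O b) = O a := by
    intro O a b
    simp only [EQg, Finset.mem_filter]
    constructor
    · rintro ⟨h, h'⟩; exact ⟨h, (heq a b h _ _).1 h'⟩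
    · rintro ⟨h, h'⟩; exact ⟨h, (heq a b h _ _).2 h'⟩
  have hEB : ∀ a b, (a, b) ∈ E → b ∈ B := fun a b h => (Finset.mem_product.1 (hE h)).2
  have hEA : ∀ a b, (a, b) ∈ E → a ∈ A := fun a b h => (Finset.mem_product.1 (hE h)).1
  have hTight : ∀ a b, (a, b) ∈ EQg E v O → Tight R F B O a b ∧ F a b (O b) = O a := by
    intro a b h
    obtain ⟨h1, h2⟩ := (hmemEQ O a b).1 h
    have h3 : F a b (O b) = O a := by rw [hF a b h1, h2]
    refine ⟨⟨hEB a b h1, h1, fun b' _ hb' => ?_⟩, h3⟩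
    rw [h3, hF a b' hb']
    exact (hle a b' hb' _ _).1 (hst _ hb')
  have hts := tree_sur hdisj hcard (hEQ O) hMm hMG hTG hAlt
  have hSur : Sur R F A B O := by
    intro S hSB hSne
    refine (hts S hSB hSne).trans (Finset.card_le_card ?_)
    intro a ha
    obtain ⟨haA, b, hb, hab⟩ := Finset.mem_filter.1 ha
    exact Finset.mem_filter.2 ⟨haA, b, hb, (hTight a b hab).1⟩
  have hiEQ : ∃ j, Tight R F B O i j ∧ o ≤ F i j (O j) := by
    have h1 := hts B subset_rfl hB
    have h2 := Finset.eq_of_subset_of_card_le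
      (Finset.filter_subset (fun a => ∃ b ∈ B, (a, b) ∈ EQg E v O) A) (by omega)
    rw [← h2] at hi
    obtain ⟨_, b, _, hib⟩ := Finset.mem_filter.1 hi
    obtain ⟨h3, h4⟩ := hTight i b hib
    exact ⟨b, h3, by rw [h4]; exact ho⟩
  obtain ⟨q, -, hq, j, hj, hjo⟩ := main_aux hFc hFa hFs B.card A B O rfl hcard hSur i hi o hiEQ
  have htq : ∀ a ∈ A, ∃ b, Tight R F B q a b := fun a ha => sur_tight hcard hq hB ha
  choose! c hc using htq
  let O' : V → ℝ := fun x => if x ∈ A then F x (c x) (q (c x)) else q x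
  have hO'A : ∀ a ∈ A, O' a = F a (c a) (q (c a)) := fun a ha => by simp only [O', ha, if_true]
  have hO'B : ∀ b ∈ B, O' b = q b := fun b hb => by
    simp only [O', Finset.disjoint_right.1 hdisj hb, if_false]
  have hO't : ∀ a ∈ A, ∀ b, Tight R F B q a b → F a b (q b) = O' a := by
    intro a ha b hb
    rw [hO'A a ha]
    exact le_antisymm ((hc a ha).2.2 b hb.1 hb.2.1) (hb.2.2 _ (hc a ha).1 (hc a ha).2.1)
  have hsurT := sur_tree hdisj hcard (hEQ O') (by
    intro S hSB hSne
    refine (hq S hSB hSne).trans (Finset.card_le_card ?_)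
    intro a ha
    obtain ⟨haA, b, hb, hab⟩ := Finset.mem_filter.1 ha
    refine Finset.mem_filter.2 ⟨haA, b, hb, (hmemEQ O' a b).2 ⟨hab.2.1, ?_⟩⟩
    rw [hO'B b hab.1, ← hO't a haA b hab, hF a b hab.2.1])
  refine ⟨O', ⟨?_, hsurT⟩, ?_⟩
  · rintro ⟨a, b⟩ he
    have haA := hEA a b he
    have hbB := hEB a b he
    refine (hle a b he _ _).2 ?_
    rw [hO'B b hbB, hO'A a haA, ← hF a b he]
    exact (hc a haA).2.2 b hbB he
  · rw [← hO't i hi j hj, hjo]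


/-- when `|A| = |B| + 1`, if some stable alternating spanning tree generating
offer profile exists, then for every `i ∈ A` and every offer below its current one there is
a stable alternating spanning tree generating offer profile with that value at `i`. -/
theorem sastg_exists_below [Fintype V] [DecidableEq V]
    (A B : Finset V) (E : Finset (V × V))
    (hdisj : Disjoint A B) (hA : A.Nonempty) (hB : B.Nonempty)
    (hE : E ⊆ A ×ˢ B)
    (hconn : ∀ x ∈ A ∪ B, ∀ y ∈ A ∪ B, ∃ p : List V, IsPath E p x y)
    (v : V → V → ℝ → ℝ)
    (hvC : ∀ e ∈ E, Continuous (v e.2 e.1) ∧ Continuous (v e.1 e.2))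
    (hvA : ∀ e ∈ E, StrictAnti (v e.2 e.1) ∧ StrictAnti (v e.1 e.2))
    (hvInv : ∀ e ∈ E, (∀ x, v e.1 e.2 (v e.2 e.1 x) = x) ∧ (∀ x, v e.2 e.1 (v e.1 e.2 x) = x))
    (hcard : A.card = B.card + 1)
    (O : V → ℝ) (hO : SASTG A B E v O) :
    ∀ i ∈ A, ∀ o ≤ O i, ∃ O' : V → ℝ, SASTG A B E v O' ∧ O' i = o := by
  exact sastg_aux A B E hdisj hB hE v hvC hvA hvInv hcard O hO

end GSM
end

section
/- Let O be a stable offer profile, and let A^T ⊆ A, B^T ⊆ B with X^T = A^T ∪ B^T. Let O' be an offer profile such that: (a) O'_k = O_k for every node k ∉ X^T; (b) the restriction of O' to X^T is a stable offer profile for the induced subgraph S|_{X^T}; (c) O'_{j'} ≥ O_{j'} for every j' ∈ B^T; (d) for every i' ∈ A^T and every j' ∈ B ∖ B^T with (i',j') ∈ E, O'_{i'} ≥ v_{i'}(j', O_{j'}). Then O' is a stable offer profile for S. -/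
open Classical

variable {V : Type*}

namespace GSM

/-- updating a stable offer profile on a subset `X^T = A^T ∪ B^T` by a profile
that is stable on the induced subgraph, does not decrease offers on `B^T`, and dominates the
outside options of `A^T`, yields a stable offer profile on all of `S`. -/
theorem stability_of_updated_profile [DecidableEq V]
    (A B : Finset V) (E : Finset (V × V))
    (hdisj : Disjoint A B) (hA : A.Nonempty) (hB : B.Nonempty)
    (hE : E ⊆ A ×ˢ B)
    (hconn : ∀ x ∈ A ∪ B, ∀ y ∈ A ∪ B, ∃ p : List V, IsPath E p x y)
    (v : V → V → ℝ → ℝ)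
    (hvC : ∀ e ∈ E, Continuous (v e.2 e.1) ∧ Continuous (v e.1 e.2))
    (hvA : ∀ e ∈ E, StrictAnti (v e.2 e.1) ∧ StrictAnti (v e.1 e.2))
    (hvInv : ∀ e ∈ E, (∀ x, v e.1 e.2 (v e.2 e.1 x) = x) ∧ (∀ x, v e.2 e.1 (v e.1 e.2 x) = x))
    (O Op : V → ℝ) (hO : Stable E v O)
    (AT BT : Finset V) (hAT : AT ⊆ A) (hBT : BT ⊆ B)
    (ha : ∀ k ∈ A ∪ B, k ∉ AT ∪ BT → Op k = O k)
    (hb : ∀ e ∈ E, e.1 ∈ AT ∪ BT → e.2 ∈ AT ∪ BT → v e.2 e.1 (Op e.1) ≤ Op e.2)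
    (hc : ∀ j' ∈ BT, O j' ≤ Op j')
    (hd : ∀ i' ∈ AT, ∀ j' ∈ B, j' ∉ BT → (i', j') ∈ E → v i' j' (O j') ≤ Op i') :
    Stable E v Op := by
  rintro ⟨i, j⟩ he
  have hm := Finset.mem_product.1 (hE he)
  have hiA : i ∈ A := hm.1
  have hjB : j ∈ B := hm.2
  have hiB : i ∉ BT := fun h => Finset.disjoint_left.1 hdisj hiA (hBT h)
  have hjA : j ∉ AT := fun h => Finset.disjoint_left.1 hdisj (hAT h) hjB
  have hs : v j i (O i) ≤ O j := hO _ he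
  show v j i (Op i) ≤ Op j
  by_cases hi : i ∈ AT
  · by_cases hj : j ∈ BT
    · exact hb _ he (Finset.mem_union_left _ hi) (Finset.mem_union_right _ hj)
    · have h1 := hd i hi j hjB hj he
      have h2 : Op j = O j := ha j (Finset.mem_union_right _ hjB) (by simp [hj, hjA])
      have h3 : v j i (Op i) ≤ v j i (v i j (O j)) := (hvA _ he).1.antitone h1
      have h4 : v j i (v i j (O j)) = O j := (hvInv _ he).2 (O j)
      linarith
  · have h2 : Op i = O i := ha i (Finset.mem_union_left _ hiA) (by simp [hi, hiB])
    rw [h2]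
    by_cases hj : j ∈ BT
    · exact hs.trans (hc j hj)
    · rw [ha j (Finset.mem_union_right _ hjB) (by simp [hj, hjA])]
      exact hs

end GSM
end

section
/- Assume |A| − |B| = 1 and that every proper subset A' ⊂ A has at least |A'| neighboring nodes in B. Let O be an offer profile, M a matching in the equality subgraph EQ(O), and T an alternating tree for M in EQ(O) rooted at the unique unmatched node, such that no node of A ∩ T has an edge of E to a node of B outside T. Then T spans all nodes of A ∪ B. -/
open Classical

variable {V : Type*}

namespace GSM

theorem aux_alt (A B : Finset V) (hdisj : Disjoint A B) (E M : Finset (V × V))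
    (hE : E ⊆ A ×ˢ B) : ∀ (l : List V) (x y : V),
    (SymMem M (x, y) ↔ x ∈ B) → List.IsChain (Adj E) (x :: y :: l) →
    IsAlternating M (x :: y :: l) →
    List.IsChain (fun u w => SymMem M (u, w) ↔ u ∈ B) (x :: y :: l) := by
  intro l
  induction l with
  | nil => intro x y h _ _; simpa using h
  | cons z l ih =>
    intro x y h hc ha
    unfold IsAlternating at ha
    have ha' : List.IsChain (fun e e' => SymMem M e ↔ ¬ SymMem M e')
      ((x, y) :: (y, z) :: ((z :: l).zip l)) := ha
    rw [List.isChain_cons_cons] at hc ha'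
    rw [List.isChain_cons_cons]
    refine ⟨h, ih y z ?_ hc.2 ha'.2⟩
    have h1 := ha'.1
    have h2 : x ∈ B ↔ ¬ y ∈ B := by
      have hd := Finset.disjoint_left.1 hdisj
      rcases hc.1 with h | h <;> have := Finset.mem_product.1 (hE h) <;>
        simp only at this <;> have h3 := hd this.1 <;> tauto
    exact not_iff_not.1 (h1.symm.trans (h.trans h2))

theorem aux_par (A B : Finset V) (hdisj : Disjoint A B) (E : Finset (V × V))
    (hE : E ⊆ A ×ˢ B) : ∀ (l : List V) (x b : V), b ∈ B →
    List.IsChain (Adj E) (x :: l) → (x :: l).getLast? = some b →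
    (x ∈ A → Odd l.length) ∧ (x ∈ B → Even l.length) := by
  have hd := Finset.disjoint_left.1 hdisj
  intro l
  induction l with
  | nil =>
    intro x b hb _ hl
    simp at hl
    subst hl
    exact ⟨fun h => absurd hb (hd h), fun _ => by simp⟩
  | cons y l ih =>
    intro x b hb hc hl
    rw [List.isChain_cons_cons] at hc
    rw [List.getLast?_cons_cons] at hl
    have := ih y b hb hc.2 hl
    rw [List.length_cons, Nat.odd_add_one, Nat.even_add_one, Nat.not_odd_iff_even,
      Nat.not_even_iff_odd]
    rcases hc.1 with h | h <;> have h2 := Finset.mem_product.1 (hE h) <;>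
        simp only at h2
    · exact ⟨fun _ => this.2 h2.2, fun h3 => absurd h3 (hd h2.1)⟩
    · exact ⟨fun h3 => absurd h2.2 (hd h3), fun _ => this.1 h2.1⟩

theorem aux_uniq (T : Finset (V × V)) (p : List V) (r b c : V)
    (hu : ∃! p : List V, IsPath T p r b) (hp : IsPath T p r b) (hcb : Adj T c b) (hne : c ≠ b)
    (hc : c ∈ p) : ∃ s, p = s ++ [c, b] := by
  obtain ⟨s, t, rfl⟩ := List.append_of_mem hc
  refine ⟨s, ?_⟩
  apply hu.unique hp
  obtain ⟨h1, h2, h3, h4⟩ := hp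
  have hbt : b ∈ t := by
    rw [List.getLast?_append_of_ne_nil _ (by simp)] at h2
    have := List.mem_of_getLast? h2
    simp only [List.mem_cons] at this
    rcases this with h | h
    · exact absurd h.symm hne
    · exact h
  refine ⟨?_, by simp, ?_, ?_⟩
  · cases s <;> simpa using h1
  · apply List.Nodup.sublist _ h3
    apply List.Sublist.append_left
    apply List.Sublist.cons_cons
    simpa using hbt
  · have h5 := List.isChain_append.1 h4
    refine List.isChain_append.2 ⟨h5.1, by simpa using hcb, ?_⟩
    simpa using h5.2.2

theorem aux_partner [Fintype V] (A B : Finset V) (hdisj : Disjoint A B) (E M T : Finset (V × V))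
    (hE : E ⊆ A ×ˢ B) (hME : M ⊆ E) (hTE : T ⊆ E) (X : Finset V) (r : V) (hrA : r ∈ A)
    (hT : IsAltTreeOn T M r X) (b : V) (hb : b ∈ B) (hbX : b ∈ X) :
    ∃ c ∈ X, (c, b) ∈ M := by
  have hd := Finset.disjoint_left.1 hdisj
  obtain ⟨⟨hX, htree⟩, hrX, hrM, -, halt, hdeg⟩ := hT
  obtain ⟨p, hp, -⟩ := htree r hrX b hbX
  have hTAB : T ⊆ A ×ˢ B := hTE.trans hE
  have hodd : Odd (p.length - 1) := by
    obtain ⟨h1, h2, h3, h4⟩ := hp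
    cases p with
    | nil => simp at h1
    | cons x l =>
      simp at h1
      subst h1
      simpa using (aux_par A B hdisj T hTAB l x b hb h4 h2).1 hrA
  have h2 := (hdeg b hbX p hp).1 hodd
  obtain ⟨e1, e2, hne, he⟩ := Finset.card_eq_two.1 h2
  have key : ∀ e ∈ ({e1, e2} : Finset (V × V)), e ∈ T ∧ e.2 = b ∧ e.1 ≠ b := by
    intro e hee
    rw [← he] at hee
    obtain ⟨h5, h6⟩ := Finset.mem_filter.1 hee
    have h7 := Finset.mem_product.1 (hTAB h5)
    have h8 : e.1 ≠ b := fun h => hd h7.1 (h ▸ hb)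
    exact ⟨h5, h6.resolve_left h8, h8⟩
  obtain ⟨t1, b1, n1⟩ := key e1 (by simp)
  obtain ⟨t2, b2, n2⟩ := key e2 (by simp)
  have hex : ∃ e ∈ T, e.2 = b ∧ e.1 ∉ p := by
    by_contra hcon
    push Not at hcon
    obtain ⟨s1, hs1⟩ := aux_uniq T p r b e1.1 (htree r hrX b hbX) hp
      (Or.inl (by rw [← b1]; exact t1)) n1 (hcon e1 t1 b1)
    obtain ⟨s2, hs2⟩ := aux_uniq T p r b e2.1 (htree r hrX b hbX) hp
      (Or.inl (by rw [← b2]; exact t2)) n2 (hcon e2 t2 b2)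
    rw [hs1] at hs2
    have := (List.append_inj' hs2 rfl).2
    simp at this
    exact hne (Prod.ext this (b1.trans b2.symm))
  obtain ⟨⟨c, b'⟩, hcT, hb', hcp⟩ := hex
  simp only at hb' hcp
  subst hb'
  have hcX := (hX _ hcT).1
  refine ⟨c, hcX, ?_⟩
  have hq : IsPath T (p ++ [c]) r c := by
    obtain ⟨h1, h2, h3, h4⟩ := hp
    refine ⟨?_, by simp, ?_, ?_⟩
    · cases p <;> simp_all
    · rw [List.nodup_append]
      refine ⟨h3, by simp, ?_⟩
      intro a ha d hd'
      simp at hd'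
      rintro rfl
      exact hcp (hd' ▸ ha)
    · refine List.isChain_append.2 ⟨h4, by simp, ?_⟩
      intro x hx y hy
      rw [h2] at hx
      simp at hx hy
      subst hx hy
      exact Or.inr hcT
  have ha := halt c hcX _ hq
  have hchain : List.IsChain (fun u w => SymMem M (u, w) ↔ u ∈ B) (p ++ [c]) := by
    obtain ⟨h1, h2, h3, h4⟩ := hq
    generalize p ++ [c] = q at *
    match q, h1, h4, ha with
    | [], h1, h4, ha => simp
    | [x], h1, h4, ha => simp
    | x :: y :: l, h1, h4, ha =>
      simp at h1
      subst h1
      refine aux_alt A B hdisj T M hTAB l x y ?_ h4 ha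
      refine ⟨?_, fun h => absurd h (hd hrA)⟩
      rintro (h | h)
      · exact absurd ⟨_, h, Or.inl rfl⟩ hrM
      · exact absurd ⟨_, h, Or.inr rfl⟩ hrM
  have h9 := ((List.isChain_append.1 hchain).2.2 b' hp.2.1 c (by simp)).2 hb
  rcases h9 with h | h
  · exact absurd hb (hd (Finset.mem_product.1 (hE (hME h))).1)
  · exact h

/-- if `|A| = |B| + 1`, every proper `A' ⊂ A` has at least `|A'|` neighbors in
`B`, and `T` is an alternating tree (rooted at the unique unmatched node) in the equality
subgraph such that no node of `A` in `T` has an edge of `E` to a node of `B` outside `T`,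
then `T` spans all of `A ∪ B`. -/
theorem alt_tree_spans [Fintype V] [DecidableEq V]
    (A B : Finset V) (E : Finset (V × V))
    (hdisj : Disjoint A B) (hA : A.Nonempty) (hB : B.Nonempty)
    (hE : E ⊆ A ×ˢ B)
    (hconn : ∀ x ∈ A ∪ B, ∀ y ∈ A ∪ B, ∃ p : List V, IsPath E p x y)
    (v : V → V → ℝ → ℝ)
    (hvC : ∀ e ∈ E, Continuous (v e.2 e.1) ∧ Continuous (v e.1 e.2))
    (hvA : ∀ e ∈ E, StrictAnti (v e.2 e.1) ∧ StrictAnti (v e.1 e.2))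
    (hvInv : ∀ e ∈ E, (∀ x, v e.1 e.2 (v e.2 e.1 x) = x) ∧ (∀ x, v e.2 e.1 (v e.1 e.2 x) = x))
    (hcard : A.card = B.card + 1)
    (hHall : ∀ A' ⊂ A, A'.card ≤ (B.filter fun b => ∃ a ∈ A', Adj E a b).card)
    (O : V → ℝ)
    (M : Finset (V × V)) (hM : IsMatching M) (hME : M ⊆ EQg E v O)
    (T : Finset (V × V)) (X : Finset V) (r : V)
    (hTE : T ⊆ EQg E v O) (hXsub : X ⊆ A ∪ B)
    (hT : IsAltTreeOn T M r X)
    (hr : ∀ x ∈ A ∪ B, ¬ Matched M x → x = r)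
    (hclosed : ∀ i ∈ A, i ∈ X → ∀ j ∈ B, (i, j) ∈ E → j ∈ X) :
    X = A ∪ B := by
  have hd := Finset.disjoint_left.1 hdisj
  have hEQ : EQg E v O ⊆ E := Finset.filter_subset _ _
  have hME' := hME.trans hEQ
  have hMAB : ∀ e ∈ M, e.1 ∈ A ∧ e.2 ∈ B := fun e he => Finset.mem_product.1 (hE (hME' he))
  have hAm : ∀ a ∈ A, a ≠ r → ∃ b, (a, b) ∈ M := by
    intro a ha har
    have : Matched M a := by
      by_contra h
      exact har (hr a (Finset.mem_union_left _ ha) h)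
    obtain ⟨e, he, h | h⟩ := this
    · exact ⟨e.2, by rw [← h]; exact he⟩
    · exact absurd (hMAB e he).2 (h ▸ hd ha)
  have hBm : ∀ b ∈ B, b ≠ r → ∃ a, (a, b) ∈ M := by
    intro b hb hbr
    have : Matched M b := by
      by_contra h
      exact hbr (hr b (Finset.mem_union_right _ hb) h)
    obtain ⟨e, he, h | h⟩ := this
    · exact absurd hb (h ▸ hd (hMAB e he).1)
    · exact ⟨e.1, by rw [← h]; exact he⟩
  have hrA : r ∈ A := by
    by_contra hrA
    have h1 : ∀ a ∈ A, ∃ b, (a, b) ∈ M := fun a ha => hAm a ha (fun h => hrA (h ▸ ha))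
    choose! f hf using h1
    have : A.card ≤ B.card := by
      apply Finset.card_le_card_of_injOn f
      · intro a ha; exact (hMAB _ (hf a ha)).2
      · intro a ha a' ha' h
        by_contra hne
        exact (hM _ (hf a ha) _ (hf a' ha') (by simp [hne])).2.2.2 h
    omega
  have hrX : r ∈ X := hT.2.1
  have hrM : ¬ Matched M r := hT.2.2.1
  have h1 : ∀ b ∈ B ∩ X, ∃ c ∈ X, (c, b) ∈ M := fun b hb =>
    aux_partner A B hdisj E M T hE hME' (hTE.trans hEQ) X r hrA hT b
      (Finset.mem_inter.1 hb).1 (Finset.mem_inter.1 hb).2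
  choose! f hfX hf using h1
  have hlt : (B ∩ X).card ≤ ((A ∩ X).erase r).card := by
    apply Finset.card_le_card_of_injOn f
    · intro b hb
      have hb' : b ∈ B ∩ X := by simpa using hb
      have : f b ≠ r := fun h => hrM ⟨_, hf b hb', Or.inl h⟩
      have h2 := (hMAB _ (hf b hb')).1
      have h3 := hfX b hb'
      simp_all
    · intro b hb b' hb' h
      by_contra hne
      exact (hM _ (hf b hb) _ (hf b' hb') (by simp [hne])).1 h
  have hrAX : r ∈ A ∩ X := Finset.mem_inter.2 ⟨hrA, hrX⟩
  rw [Finset.card_erase_of_mem hrAX] at hlt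
  have hpos := Finset.card_pos.2 ⟨r, hrAX⟩
  have hAX : A ⊆ X := by
    by_contra hnot
    have hss : A ∩ X ⊂ A := by
      refine Finset.ssubset_iff_subset_ne.2 ⟨Finset.inter_subset_left, fun h => hnot ?_⟩
      exact Finset.inter_eq_left.1 h
    have h2 := hHall _ hss
    have h3 : (B.filter fun b => ∃ a ∈ A ∩ X, Adj E a b) ⊆ B ∩ X := by
      intro b hb
      obtain ⟨hbB, a, ha, hab⟩ := Finset.mem_filter.1 hb
      obtain ⟨haA, haX⟩ := Finset.mem_inter.1 ha
      refine Finset.mem_inter.2 ⟨hbB, ?_⟩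
      rcases hab with h | h
      · exact hclosed a haA haX b hbB h
      · exact absurd hbB (hd (Finset.mem_product.1 (hE h)).1)
    have h4 := Finset.card_le_card h3
    have h5 := h2.trans (by convert h4)
    omega
  apply Finset.Subset.antisymm hXsub
  intro x hx
  rcases Finset.mem_union.1 hx with h | h
  · exact hAX h
  · by_cases hxr : x = r
    · exact hxr ▸ hrX
    · obtain ⟨a, ha⟩ := hBm x h hxr
      have haA := (hMAB _ ha).1
      exact hclosed a haA (hAX haA) x h (hME' ha)


end GSM
end

section
/- Let O be a stable offer profile, M ⊆ E a matching, and s a nonnegative split such that for every (i,j) ∈ M: s_i + s_j = w(i,j), O_i = u_i(j, s_i) and O_j = u_j(i, s_j). Then the weighted matching (M, s) admits no blocking pair: for every edge (i,j) ∈ E there is no split (s'_i, s'_j) with s'_i + s'_j = w(i,j) such that u_i(j, s'_i) > O_i and u_j(i, s'_j) > O_j. -/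
open Classical

variable {V : Type*}

namespace GSM

/-- a stable offer profile realized by a weighted matching admits no blocking
pair: no edge can be split so that both endpoints get strictly more than their offers. Here
stability is expressed with the pareto payoff function `v j i x = u j i (w i j - uinv i j x)`. -/
theorem no_blocking_pair [DecidableEq V]
    (A B : Finset V) (E : Finset (V × V))
    (hdisj : Disjoint A B) (hA : A.Nonempty) (hB : B.Nonempty)
    (hE : E ⊆ A ×ˢ B)
    (hconn : ∀ x ∈ A ∪ B, ∀ y ∈ A ∪ B, ∃ p : List V, IsPath E p x y)
    (w : V → V → ℝ) (hw : ∀ e ∈ E, 0 ≤ w e.1 e.2)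
    (u uinv : V → V → ℝ → ℝ)
    (hu : ∀ e ∈ E, Continuous (u e.1 e.2) ∧ StrictMono (u e.1 e.2) ∧
      Continuous (u e.2 e.1) ∧ StrictMono (u e.2 e.1))
    (huinv : ∀ e ∈ E,
      Function.LeftInverse (uinv e.1 e.2) (u e.1 e.2) ∧
      Function.RightInverse (uinv e.1 e.2) (u e.1 e.2) ∧
      Function.LeftInverse (uinv e.2 e.1) (u e.2 e.1) ∧
      Function.RightInverse (uinv e.2 e.1) (u e.2 e.1))
    (O : V → ℝ)
    (hstab : ∀ e ∈ E, u e.2 e.1 (w e.1 e.2 - uinv e.1 e.2 (O e.1)) ≤ O e.2)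
    (M : Finset (V × V)) (hM : IsMatching M) (hME : M ⊆ E)
    (s : V → ℝ) (hs0 : ∀ k ∈ A ∪ B, 0 ≤ s k)
    (hsplit : ∀ e ∈ M, s e.1 + s e.2 = w e.1 e.2)
    (hOs : ∀ e ∈ M, O e.1 = u e.1 e.2 (s e.1) ∧ O e.2 = u e.2 e.1 (s e.2)) :
    ∀ e ∈ E, ¬ ∃ si sj : ℝ, si + sj = w e.1 e.2 ∧
      O e.1 < u e.1 e.2 si ∧ O e.2 < u e.2 e.1 sj := by
  rintro e he ⟨si, sj, hsum, h1, h2⟩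
  obtain ⟨-, m1, -, m2⟩ := hu e he
  have hr : u e.1 e.2 (uinv e.1 e.2 (O e.1)) = O e.1 := (huinv e he).2.1 (O e.1)
  have a1 : uinv e.1 e.2 (O e.1) < si := m1.lt_iff_lt.mp (by rw [hr]; exact h1)
  have a2 : w e.1 e.2 - uinv e.1 e.2 (O e.1) < sj :=
    m2.lt_iff_lt.mp (lt_of_le_of_lt (hstab e he) h2)
  linarith

end GSM
end
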